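/- Let r ≥ 2, let a ≥ 1, and let 1 ≤ d_1 ≤ ⋯ ≤ d_{r+a−1} be integers. Let Z ⊆ W_{r,d_1}×⋯×W_{r,d_{r+a−1}} be the set of tuples (F_1,…,F_{r+a−1}) with dim V(F_1,…,F_{r+a−1}) ≥ 1, let D be the set of tuples with dim V(F_1,…,F_{r+a−2}) ≥ 2, and let L be the set of tuples (F_1,…,F_{r+a−1}) such that V(F_1,…,F_{r+a−1}) contains a line of ℙ^r. Then the Zariski closure of Z \ D has a unique irreducible component of maximal dimension, and this component equals L; in particular, that component consists of tuples of homogeneous forms all vanishing on some common line. -/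

import Mathlib

open MvPolynomial

noncomputable section

variable (K : Type*) [Field K] (M : Type*) [AddCommGroup M] [Module K M]

/-- Evaluation of a polynomial in the linear functionals of `M` at a point `v : M`.
These are precisely the polynomial functions on the affine space `M`. -/
def polyEval (p : MvPolynomial (M →ₗ[K] K) K) (v : M) : K :=
  MvPolynomial.eval (fun φ : M →ₗ[K] K => φ v) p

lemma polyEval_mul (p q : MvPolynomial (M →ₗ[K] K) K) (v : M) :
    polyEval K M (p * q) v = polyEval K M p v * polyEval K M q v :=
  map_mul (MvPolynomial.eval fun φ : M →ₗ[K] K => φ v) p q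

/-- The collection of Zariski-closed subsets of the affine space `M`:
common zero loci of families of polynomial functions. -/
def zariskiCloseds : Set (Set M) :=
  {s | ∃ S : Set (MvPolynomial (M →ₗ[K] K) K), s = {v | ∀ p ∈ S, polyEval K M p v = 0}}

/-- The Zariski topology on an affine space (vector space) `M` over `K`. -/
def zariskiTopology : TopologicalSpace M := by
  refine TopologicalSpace.ofClosed (zariskiCloseds K M) ⟨{1}, ?_⟩ ?_ ?_
  · ext v
    simp [polyEval]
  · intro A hA
    choose S hS using fun a : A => hA a.2
    refine ⟨⋃ a : A, S a, ?_⟩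
    ext v
    simp only [Set.mem_sInter, Set.mem_setOf_eq, Set.mem_iUnion]
    constructor
    · rintro h p ⟨a, hp⟩
      have := h a a.2
      rw [hS a] at this
      exact this p hp
    · intro h t ht
      have : v ∈ {w | ∀ p ∈ S ⟨t, ht⟩, polyEval K M p w = 0} :=
        fun p hp => h p ⟨⟨t, ht⟩, hp⟩
      rw [← hS ⟨t, ht⟩] at this
      exact this
  · rintro s ⟨S₁, rfl⟩ t ⟨S₂, rfl⟩
    refine ⟨Set.image2 (· * ·) S₁ S₂, ?_⟩
    ext v
    simp only [Set.mem_union, Set.mem_setOf_eq]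
    constructor
    · rintro (h | h) p ⟨p₁, h₁, p₂, h₂, rfl⟩
      · show polyEval K M (p₁ * p₂) v = 0
        rw [polyEval_mul, h p₁ h₁, zero_mul]
      · show polyEval K M (p₁ * p₂) v = 0
        rw [polyEval_mul, h p₂ h₂, mul_zero]
    · intro h
      by_contra hc
      push_neg at hc
      obtain ⟨⟨p₁, h₁, hv₁⟩, ⟨p₂, h₂, hv₂⟩⟩ := hc
      have h12 := h (p₁ * p₂) ⟨p₁, h₁, p₂, h₂, rfl⟩
      rw [polyEval_mul] at h12
      exact mul_ne_zero hv₁ hv₂ h12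

/-- The dimension of a subset of affine space: the Krull dimension of its Zariski closure. -/
def dimSet {M : Type*} [TopologicalSpace M] (s : Set M) : WithBot ℕ∞ :=
  topologicalKrullDim ↥(closure s)

/-- `vdimGE r n F m` says that the common projective vanishing locus
`V(F 0, …, F (n-1)) ⊆ ℙ^r` has dimension at least `m` (with `dim ∅ = -∞`).
This is encoded via the Krull dimension of the homogeneous coordinate ring of the
affine cone: `dim V(F) ≥ m` iff the cone has Krull dimension at least `max m 0 + 1`. -/
def vdimGE {K : Type*} [Field K] (r n : ℕ) (F : Fin n → MvPolynomial (Fin (r + 1)) K)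
    (m : ℤ) : Prop :=
  ((m.toNat + 1 : ℕ) : WithBot ℕ∞) ≤
    ringKrullDim (MvPolynomial (Fin (r + 1)) K ⧸ Ideal.span (Set.range F))

end

noncomputable section Statement1

open MvPolynomial

variable (K : Type*) [Field K]

/-- The affine space `W_{r, d 0} × ⋯ × W_{r, d (n-1)}` of `n`-tuples of homogeneous
forms of degrees `d 0, …, d (n-1)` in the variables `x_0, …, x_r`. -/
abbrev tupleSpace (r n : ℕ) (d : Fin n → ℕ) : Type _ :=
  (i : Fin n) → ↥(homogeneousSubmodule (Fin (r + 1)) K (d i))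

/-- The Zariski topology on the affine space of tuples of forms. -/
instance (r n : ℕ) (d : Fin n → ℕ) : TopologicalSpace (tupleSpace K r n d) :=
  zariskiTopology K _

/-- The forms `F 0, …, F (n-1)` all vanish on a common line of `ℙ^r`. -/
def vanishOnCommonLine {r n : ℕ} {d : Fin n → ℕ} (F : tupleSpace K r n d) : Prop :=
  ∃ v w : Fin (r + 1) → K, LinearIndependent K ![v, w] ∧
    ∀ i : Fin n, ∀ s t : K,
      MvPolynomial.eval (fun j => s * v j + t * w j) (F i : MvPolynomial (Fin (r + 1)) K) = 0

end Statement1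

/-!
The proof counts parameters at a generic point. Let `T ⊆ Z` be irreducible with `T ⊄ D`, and let
`F_j` be the forms belonging to its generic point, over an algebraically closed field `Ω ⊇ K`. They
lie in a prime `P` cutting out a curve `C`; let `b` be the dimension of the linear span of `C`. If
`b = 1` then `C` is a line and `T ⊆ L`.

If `b ≥ 2`, choose first the span, at the cost of `(b + 1) (r - b)` parameters, and then the forms
one after the other. Since `T ⊄ D`, at most `b - 1` of the forms cut down the dimension, and none of
these has to be the last one. Each of the others vanishes on a variety containing `C`, hence obeys
at least `b d_j + 1` linear conditions, because the Hilbert function of a nondegenerate curve in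
`ℙ^b` is at least `b t + 1` in degree `t`; this in turn comes from `dim U V ≥ dim U + dim V - 1` for
spaces of polynomials modulo a prime ideal over an algebraically closed field. As the last degree is
maximal, `T` has dimension less than `∑ j, (N_j - (d_j + 1)) + 2 (r - 1)`, with `N_j` the number of
coefficients of `F_j`. The right hand side is a lower bound for the dimension of `L`: deform a tuple
that vanishes on a coordinate line but on no line near it; the coordinates of the deformation have
independent linear parts.
-/

namespace CommonLine

noncomputable section

/-! ### Hilbert functions of nondegenerate prime ideals -/

section LinearCauchyDavenport

variable {k L : Type*} [Field k] [Field L] [Algebra k L]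

lemma mem_one_of_forall_mul_mem [IsAlgClosed k] {U : Submodule k L} [FiniteDimensional k U]
    (hU : U ≠ ⊥) {x : L} (hx : ∀ u ∈ U, x * u ∈ U) : x ∈ (1 : Submodule k L) := by
  have hint : IsIntegral k x :=
    isIntegral_of_smul_mem_submodule U hU (Module.Finite.iff_fg.mp inferInstance) x hx
  obtain ⟨c, rfl⟩ := minpoly.mem_range_of_degree_eq_one k x
    (IsAlgClosed.degree_eq_one_of_irreducible k (minpoly.irreducible hint))
  exact Submodule.algebraMap_mem c

variable (U V : Submodule k L) (x : L)

/-- The enlarged half `U + xV` of the multiplicative Dyson transform of the pair `(U, V)`. -/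
def transformLeft : Submodule k L := U ⊔ V.map (LinearMap.mulLeft k x)

/-- The shrunk half `V ∩ x⁻¹U` of the multiplicative Dyson transform of the pair `(U, V)`. -/
def transformRight : Submodule k L := V ⊓ U.comap (LinearMap.mulLeft k x)

lemma transformLeft_mul_transformRight_le :
    transformLeft U V x * transformRight U V x ≤ U * V := by
  rw [transformLeft, Submodule.sup_mul]
  refine sup_le (mul_le_mul' le_rfl inf_le_left) (Submodule.mul_le.mpr ?_)
  rintro _ ⟨v, hv, rfl⟩ w ⟨-, hw⟩
  have : LinearMap.mulLeft k x v * w = LinearMap.mulLeft k x w * v := by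
    simp only [LinearMap.mulLeft_apply]; ring
  rw [this]
  exact Submodule.mul_mem_mul hw hv

instance [FiniteDimensional k U] [FiniteDimensional k V] :
    FiniteDimensional k (transformLeft U V x) := by
  unfold transformLeft; infer_instance

instance [FiniteDimensional k V] : FiniteDimensional k (transformRight U V x) :=
  Submodule.finiteDimensional_inf_left _ _

lemma finrank_map_mulLeft (hx : x ≠ 0) :
    Module.finrank k (V.map (LinearMap.mulLeft k x)) = Module.finrank k V :=
  (Submodule.equivMapOfInjective _ (mul_right_injective₀ hx) V).finrank_eq.symm

lemma finrank_transformLeft_add_finrank_transformRight [FiniteDimensional k U]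
    [FiniteDimensional k V] (hx : x ≠ 0) :
    Module.finrank k (transformLeft U V x) + Module.finrank k (transformRight U V x) =
      Module.finrank k U + Module.finrank k V := by
  have hmap : (transformRight U V x).map (LinearMap.mulLeft k x) =
      U ⊓ V.map (LinearMap.mulLeft k x) := by
    rw [transformRight, Submodule.map_inf _ (mul_right_injective₀ hx), Submodule.map_comap_eq]
    have := LinearMap.map_le_range (f := LinearMap.mulLeft k x) (p := V)
    rw [← inf_assoc, inf_eq_left.mpr this, inf_comm]
  rw [← finrank_map_mulLeft (transformRight U V x) x hx, hmap, ← finrank_map_mulLeft V x hx]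
  exact Submodule.finrank_sup_add_finrank_inf_eq U _

/-- The linear analogue of the Cauchy–Davenport inequality. If some `x = u / w` does not multiply
`V` into `U`, the Dyson transform shrinks `V`; otherwise `V` is one-dimensional, since a quotient of
two of its elements stabilises `U` and so is a scalar. -/
theorem finrank_add_finrank_le_finrank_mul_add_one [IsAlgClosed k] (U V : Submodule k L)
    [FiniteDimensional k U] [FiniteDimensional k V] (hU : U ≠ ⊥) (hV : V ≠ ⊥) :
    Module.finrank k U + Module.finrank k V ≤ Module.finrank k ↥(U * V) + 1 := by
  have : FiniteDimensional k ↥(U * V) := Module.Finite.iff_fg.mpr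
    (.mul (Module.Finite.iff_fg.mp ‹_›) (Module.Finite.iff_fg.mp ‹_›))
  obtain ⟨w, hw, hw0⟩ := Submodule.exists_mem_ne_zero_of_ne_bot hV
  by_cases hstab : ∀ u ∈ U, ∀ v ∈ V, u / w * v ∈ U
  · have hVw : V ≤ k ∙ w := by
      intro v hv
      obtain ⟨c, hc⟩ := Submodule.mem_one.mp <| mem_one_of_forall_mul_mem hU (x := v / w)
        fun u hu ↦ by convert hstab u hu v hv using 1; ring
      refine Submodule.mem_span_singleton.mpr ⟨c, ?_⟩
      rw [Algebra.smul_def, hc, div_mul_cancel₀ v hw0]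
    have hV1 : Module.finrank k V ≤ 1 :=
      (Submodule.finrank_mono hVw).trans (finrank_span_singleton hw0).le
    have hUw : U.map (LinearMap.mulLeft k w) ≤ U * V := by
      rintro _ ⟨u, hu, rfl⟩
      rw [LinearMap.mulLeft_apply, mul_comm w u]
      exact Submodule.mul_mem_mul hu hw
    have := Submodule.finrank_mono hUw
    rw [finrank_map_mulLeft U w hw0] at this
    omega
  · push Not at hstab
    obtain ⟨u, hu, v, hv, huv⟩ := hstab
    set x := u / w
    have hx0 : x ≠ 0 := fun h ↦ huv (by simp [h])
    have : Module.finrank k (transformRight U V x) < Module.finrank k V :=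
      Submodule.finrank_lt_finrank_of_lt (inf_le_left.lt_of_ne fun h ↦
        huv (h.ge hv : v ∈ transformRight U V x).2)
    have hwx : w ∈ transformRight U V x := ⟨hw, by simpa [x, div_mul_cancel₀ u hw0] using hu⟩
    have ih := finrank_add_finrank_le_finrank_mul_add_one (transformLeft U V x)
      (transformRight U V x) (ne_bot_of_le_ne_bot hU le_sup_left)
      ((Submodule.ne_bot_iff _).mpr ⟨w, hwx, hw0⟩)
    rw [finrank_transformLeft_add_finrank_transformRight U V x hx0] at ih
    exact ih.trans (Nat.add_le_add_right
      (Submodule.finrank_mono (transformLeft_mul_transformRight_le U V x)) 1)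
termination_by Module.finrank k V

end LinearCauchyDavenport

section HilbertFunction

/-- The exponents of the monomials of degree `d` in the variables `σ`. -/
abbrev DegreeExponent (σ : Type*) (d : ℕ) : Type _ := {m : σ →₀ ℕ // m.degree = d}

instance (σ : Type*) [Finite σ] (d : ℕ) : Finite (DegreeExponent σ d) :=
  ((Finsupp.finite_of_degree_le (σ := σ) d).subset
    fun m (hm : m.degree = d) ↦ hm.le).to_subtype

instance (σ : Type*) [Finite σ] (d : ℕ) : Fintype (DegreeExponent σ d) := Fintype.ofFinite _

variable {σ k : Type*} [Field k]

/-- The monomial basis of the space of forms of degree `d`. -/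
def formBasis (σ k : Type*) [Field k] (d : ℕ) :
    Module.Basis (DegreeExponent σ d) k (homogeneousSubmodule σ k d) :=
  (basisRestrictSupport k {m : σ →₀ ℕ | m.degree = d}).map
    (LinearEquiv.ofEq _ _ (homogeneousSubmodule_eq_finsupp_supported σ k d).symm)

instance [Finite σ] (d : ℕ) : FiniteDimensional k (homogeneousSubmodule σ k d) :=
  .of_basis (formBasis σ k d)

lemma finrank_homogeneousSubmodule [Finite σ] (d : ℕ) :
    Module.finrank k (homogeneousSubmodule σ k d) = Fintype.card (DegreeExponent σ d) :=
  Module.finrank_eq_card_basis (formBasis σ k d)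

/-- The Hilbert function of the quotient by `P`: the dimension of the space of residue classes of
forms of degree `d`. -/
def hilbertFunction (P : Ideal (MvPolynomial σ k)) (d : ℕ) : ℕ :=
  Module.finrank k ((homogeneousSubmodule σ k d).map (Ideal.Quotient.mkₐ k P).toLinearMap)

/-- The forms of degree `d` belonging to `P`. -/
def formsIn (P : Ideal (MvPolynomial σ k)) (d : ℕ) : Submodule k (MvPolynomial σ k) :=
  homogeneousSubmodule σ k d ⊓ P.restrictScalars k

lemma hilbertFunction_add_finrank_formsIn [Finite σ] (P : Ideal (MvPolynomial σ k)) (d : ℕ) :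
    hilbertFunction P d + Module.finrank k (formsIn P d) =
      Fintype.card (DegreeExponent σ d) := by
  let q := (Ideal.Quotient.mkₐ k P).toLinearMap.domRestrict (homogeneousSubmodule σ k d)
  have hker : (LinearMap.ker q).map (homogeneousSubmodule σ k d).subtype = formsIn P d := by
    ext f
    simp [q, formsIn, Ideal.Quotient.eq_zero_iff_mem, and_comm]
  rw [← finrank_homogeneousSubmodule (k := k), ← LinearMap.finrank_range_add_finrank_ker q,
    hilbertFunction, ← hker, LinearMap.range_domRestrict, Submodule.finrank_map_subtype_eq]

lemma hilbertFunction_anti [Finite σ] {P Q : Ideal (MvPolynomial σ k)} (hPQ : P ≤ Q) (d : ℕ) :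
    hilbertFunction Q d ≤ hilbertFunction P d := by
  have : FiniteDimensional k (formsIn Q d) := Submodule.finiteDimensional_inf_left _ _
  have hmono : Module.finrank k (formsIn P d) ≤ Module.finrank k (formsIn Q d) :=
    Submodule.finrank_mono (inf_le_inf_left _ fun _ hf ↦ hPQ hf)
  have hP := hilbertFunction_add_finrank_formsIn P d
  have hQ := hilbertFunction_add_finrank_formsIn Q d
  omega

/-- `b * d + 1` is the Hilbert function of the rational normal curve of degree `b`. -/
theorem mul_add_one_le_hilbertFunction [IsAlgClosed k] [Finite σ] (P : Ideal (MvPolynomial σ k))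
    [P.IsPrime] {b : ℕ} (hb : b + 1 ≤ hilbertFunction P 1) (d : ℕ) :
    b * d + 1 ≤ hilbertFunction P d := by
  let ψ : (MvPolynomial σ k ⧸ P) →ₐ[k] FractionRing (MvPolynomial σ k ⧸ P) :=
    IsScalarTower.toAlgHom k _ _
  let q := ψ.comp (Ideal.Quotient.mkₐ k P)
  let U (e : ℕ) := (homogeneousSubmodule σ k e).map q.toLinearMap
  have hU (e : ℕ) : hilbertFunction P e = Module.finrank k (U e) := by
    have : U e = ((homogeneousSubmodule σ k e).map
      (Ideal.Quotient.mkₐ k P).toLinearMap).map ψ.toLinearMap := by rw [← Submodule.map_comp]; rfl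
    rw [this]
    exact (Submodule.equivMapOfInjective ψ.toLinearMap (IsFractionRing.injective _ _) _).finrank_eq
  have hne {e : ℕ} (he : 1 ≤ hilbertFunction P e) : U e ≠ ⊥ := fun h ↦ by
    rw [hU, h, finrank_bot] at he
    omega
  induction d with
  | zero =>
    rw [mul_zero, zero_add, hU, Nat.one_le_iff_ne_zero, Ne, Submodule.finrank_eq_zero]
    exact (Submodule.ne_bot_iff _).mpr ⟨1, ⟨1, isHomogeneous_one _ _, map_one q⟩, one_ne_zero⟩
  | succ d ih =>
    have hle : U d * U 1 ≤ U (d + 1) := by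
      rw [← Submodule.map_mul _ _ q]
      exact Submodule.map_mono (homogeneousSubmodule_mul d 1)
    have hCD := finrank_add_finrank_le_finrank_mul_add_one (U d) (U 1) (hne (by omega))
      (hne (by omega))
    have hmul := Submodule.finrank_mono hle
    rw [← hU, ← hU] at hCD
    rw [← hU (d + 1)] at hmul
    rw [mul_add]
    omega

end HilbertFunction

/-! ### Ideals defined over a subfield -/

section MapCoeff

variable {σ R A : Type*} [CommRing R] [CommRing A] [Algebra R A]

/-- The coefficientwise application of a linear functional `l : A → R` to polynomials over `A`. -/
def mapCoeff (l : A →ₗ[R] R) : MvPolynomial σ A →+ MvPolynomial σ R :=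
  { toFun := AddMonoidAlgebra.map l.toAddMonoidHom
    map_zero' := AddMonoidAlgebra.map_zero _
    map_add' := AddMonoidAlgebra.map_add _ }

@[simp]
lemma coeff_mapCoeff (l : A →ₗ[R] R) (f : MvPolynomial σ A) (m : σ →₀ ℕ) :
    coeff m (mapCoeff l f) = l (coeff m f) := rfl

lemma mapCoeff_map_mul (l : A →ₗ[R] R) (g : MvPolynomial σ R) (f : MvPolynomial σ A) :
    mapCoeff l (map (algebraMap R A) g * f) = g * mapCoeff l f := by
  classical
  ext m
  simp only [coeff_mapCoeff, coeff_mul, map_sum, coeff_map, ← Algebra.smul_def, map_smul,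
    smul_eq_mul]

lemma isHomogeneous_mapCoeff (l : A →ₗ[R] R) {f : MvPolynomial σ A} {d : ℕ}
    (hf : f.IsHomogeneous d) : (mapCoeff l f).IsHomogeneous d :=
  fun m hm ↦ hf fun h ↦ hm (by rw [coeff_mapCoeff, h, map_zero])

lemma eval_mapCoeff (l : A →ₗ[R] R) (f : MvPolynomial σ A) (z : σ → R) :
    eval z (mapCoeff l f) = l (eval (fun i ↦ algebraMap R A (z i)) f) := by
  induction f using MvPolynomial.induction_on' with
  | monomial m a =>
    have hmon : mapCoeff l (monomial m a) = monomial m (l a) := by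
      classical
      ext m'
      simp only [coeff_mapCoeff, coeff_monomial, apply_ite l, map_zero]
    have hprod : (m.prod fun i e ↦ algebraMap R A (z i) ^ e) =
        algebraMap R A (m.prod fun i e ↦ z i ^ e) := by
      simp only [Finsupp.prod, map_prod, map_pow]
    rw [hmon, eval_monomial, eval_monomial, hprod, mul_comm a, ← Algebra.smul_def, map_smul,
      smul_eq_mul, mul_comm]
  | add f g hf hg => rw [map_add, map_add, hf, hg, map_add, map_add]

lemma mapCoeff_mem_of_mem_map (l : A →ₗ[R] R) {p : Ideal (MvPolynomial σ R)}
    {f : MvPolynomial σ A} (hf : f ∈ p.map (map (algebraMap R A))) : mapCoeff l f ∈ p := by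
  induction hf using Submodule.closure_induction with
  | zero => rw [map_zero]; exact p.zero_mem
  | add f g _ _ hf hg => rw [map_add]; exact p.add_mem hf hg
  | smul_mem a f hf =>
    obtain ⟨g, hg, rfl⟩ := hf
    rw [smul_eq_mul, mul_comm, mapCoeff_map_mul]
    exact p.mul_mem_right _ hg

/-- Expanding the coefficients of `f` in a basis of `A` writes `f` through its images under the
coordinate functionals. -/
lemma mem_span_range_mapCoeff [Module.Free R A] (f : MvPolynomial σ A) :
    f ∈ Submodule.span A (Set.range fun l : A →ₗ[R] R ↦ map (algebraMap R A) (mapCoeff l f)) := by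
  classical
  let b := Module.Free.chooseBasis R A
  let s := f.support.biUnion fun m ↦ (b.repr (coeff m f)).support
  have hf : f = ∑ i ∈ s, b i • map (algebraMap R A) (mapCoeff (b.coord i) f) := by
    ext m
    simp only [coeff_sum, coeff_smul, coeff_map, coeff_mapCoeff, smul_eq_mul]
    have hs : (b.repr (coeff m f)).support ⊆ s := by
      by_cases hm : m ∈ f.support
      · exact Finset.subset_biUnion_of_mem (fun m ↦ (b.repr (coeff m f)).support) hm
      · simp [notMem_support_iff.mp hm]
    conv_lhs => rw [← b.linearCombination_repr (coeff m f), Finsupp.linearCombination_apply,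
      Finsupp.sum_of_support_subset _ hs _ (by simp)]
    exact Finset.sum_congr rfl fun i _ ↦ by rw [Algebra.smul_def, mul_comm]; rfl
  rw [hf]
  exact Submodule.sum_mem _ fun i _ ↦ Submodule.smul_mem _ _
    (Submodule.subset_span ⟨b.coord i, by rw [← hf]⟩)

lemma mem_map_iff_forall_mapCoeff_mem [Module.Free R A] {p : Ideal (MvPolynomial σ R)}
    {f : MvPolynomial σ A} :
    f ∈ p.map (map (algebraMap R A)) ↔ ∀ l : A →ₗ[R] R, mapCoeff l f ∈ p := by
  refine ⟨fun hf l ↦ mapCoeff_mem_of_mem_map l hf, fun hf ↦ ?_⟩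
  have hle : Submodule.span A (Set.range fun l : A →ₗ[R] R ↦ map (algebraMap R A) (mapCoeff l f)) ≤
      (p.map (map (algebraMap R A))).restrictScalars A :=
    Submodule.span_le.mpr (by rintro _ ⟨l, rfl⟩; exact Ideal.mem_map_of_mem _ (hf l))
  exact hle (mem_span_range_mapCoeff f)

lemma eval_algebraMap_eq_zero_of_mem_map {p : Ideal (MvPolynomial σ R)} {z : σ → R}
    (hz : ∀ g ∈ p, eval z g = 0) {f : MvPolynomial σ A} (hf : f ∈ p.map (map (algebraMap R A))) :
    eval (fun i ↦ algebraMap R A (z i)) f = 0 := by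
  have hle : p.map (map (algebraMap R A)) ≤
      RingHom.ker (eval fun i ↦ algebraMap R A (z i)) :=
    Ideal.map_le_iff_le_comap.mpr fun g hg ↦ by
      rw [Ideal.mem_comap, RingHom.mem_ker, eval_map, ← map_zero (algebraMap R A), ← hz g hg]
      exact aeval_algebraMap_apply A z g
  exact hle hf

end MapCoeff

section GeometricallyPrime

variable {σ k A : Type*} [Field k] [CommRing A] [Algebra k A] [Finite σ]

lemma mem_of_forall_eval_eq_zero [IsAlgClosed k] {p : Ideal (MvPolynomial σ k)} [p.IsPrime]
    {f : MvPolynomial σ k} (hf : ∀ z : σ → k, (∀ g ∈ p, eval z g = 0) → eval z f = 0) : f ∈ p := by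
  rw [← IsPrime.vanishingIdeal_zeroLocus (K := k) p]
  intro z hz
  simpa [aeval_eq_eval] using hf z fun g hg ↦ by simpa [aeval_eq_eval] using hz g hg

/-- Coordinates of `f` and `g` that do not lie in `p` are nonzero at a common zero of `p`, whereas
`f * g` vanishes there. -/
theorem isPrime_map_algebraMap [IsAlgClosed k] [IsDomain A] (p : Ideal (MvPolynomial σ k))
    [hp : p.IsPrime] : (p.map (map (algebraMap k A))).IsPrime where
  ne_top' htop := by
    have h1 : (1 : MvPolynomial σ k) ∈ p := mem_of_forall_eval_eq_zero fun z hz ↦ by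
      have := eval_algebraMap_eq_zero_of_mem_map (A := A) hz (htop ▸ Submodule.mem_top (x := 1))
      simp at this
    exact hp.ne_top ((Ideal.eq_top_iff_one p).mpr h1)
  mem_or_mem' {f g} hfg := by
    by_contra! hc
    simp only [mem_map_iff_forall_mapCoeff_mem, not_forall] at hc
    obtain ⟨⟨l, hl⟩, l', hl'⟩ := hc
    refine (hp.mul_mem_iff_mem_or_mem.not.mpr (not_or.mpr ⟨hl, hl'⟩))
      (mem_of_forall_eval_eq_zero fun z hz ↦ ?_)
    have h0 := eval_algebraMap_eq_zero_of_mem_map hz hfg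
    rw [map_mul, mul_eq_zero] at h0
    rw [map_mul, eval_mapCoeff, eval_mapCoeff]
    rcases h0 with h0 | h0 <;> simp [h0]

end GeometricallyPrime

section IsDefinedOver

variable {K Ω σ : Type*} [Field K] [Field Ω] [Algebra K Ω]

/-- The polynomial `f` has all its coefficients in the subfield `k`. -/
def HasCoeffsIn (k : IntermediateField K Ω) (f : MvPolynomial σ Ω) : Prop :=
  ∀ m, coeff m f ∈ k

/-- The ideal `P` is defined over the subfield `k`: it is generated by polynomials with coefficients
in `k`. -/
def IsDefinedOver (k : IntermediateField K Ω) (P : Ideal (MvPolynomial σ Ω)) : Prop :=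
  P ≤ Ideal.span {f | f ∈ P ∧ HasCoeffsIn k f}

variable {k k' : IntermediateField K Ω}

lemma HasCoeffsIn.mono (hk : k ≤ k') {f : MvPolynomial σ Ω} (hf : HasCoeffsIn k f) :
    HasCoeffsIn k' f :=
  fun m ↦ hk (hf m)

lemma hasCoeffsIn_iff_mem_range_map {f : MvPolynomial σ Ω} :
    HasCoeffsIn k f ↔ f ∈ Set.range (map (σ := σ) (algebraMap k Ω)) := by
  rw [mem_range_map_iff_coeffs_subset]
  refine ⟨fun hf x hx ↦ ?_, fun hf m ↦ ?_⟩
  · obtain ⟨m, -, rfl⟩ := mem_coeffs_iff.mp hx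
    exact ⟨⟨_, hf m⟩, rfl⟩
  · by_cases hm : coeff m f = 0
    · rw [hm]; exact zero_mem k
    · obtain ⟨c, hc⟩ := hf (coeff_mem_coeffs m hm)
      rw [← hc]; exact c.2

lemma IsDefinedOver.mono (hk : k ≤ k') {P : Ideal (MvPolynomial σ Ω)} (hP : IsDefinedOver k P) :
    IsDefinedOver k' P :=
  hP.trans (Ideal.span_mono fun _ hf ↦ ⟨hf.1, hf.2.mono hk⟩)

lemma isDefinedOver_span {S : Set (MvPolynomial σ Ω)} (hS : ∀ f ∈ S, HasCoeffsIn k f) :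
    IsDefinedOver k (Ideal.span S) :=
  Ideal.span_mono fun f hf ↦ ⟨Ideal.subset_span hf, hS f hf⟩

lemma IsDefinedOver.sup {P Q : Ideal (MvPolynomial σ Ω)} (hP : IsDefinedOver k P)
    (hQ : IsDefinedOver k Q) : IsDefinedOver k (P ⊔ Q) :=
  sup_le (hP.trans (Ideal.span_mono fun _ hf ↦ ⟨Ideal.mem_sup_left hf.1, hf.2⟩))
    (hQ.trans (Ideal.span_mono fun _ hf ↦ ⟨Ideal.mem_sup_right hf.1, hf.2⟩))

lemma isDefinedOver_iff_le_map_comap {P : Ideal (MvPolynomial σ Ω)} :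
    IsDefinedOver k P ↔
      P ≤ (P.comap (map (algebraMap k Ω))).map (map (algebraMap k Ω)) := by
  have : {f | f ∈ P ∧ HasCoeffsIn k f} =
      map (algebraMap k Ω) '' (P.comap (map (algebraMap k Ω)) : Set (MvPolynomial σ k)) := by
    ext f
    rw [Set.mem_ofPred_eq, hasCoeffsIn_iff_mem_range_map]
    exact ⟨fun ⟨hf, g, hg⟩ ↦ ⟨g, by simpa [hg] using hf, hg⟩,
      fun ⟨g, hgP, hg⟩ ↦ ⟨hg ▸ hgP, g, hg⟩⟩
  rw [IsDefinedOver, this, Ideal.map]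

theorem IsDefinedOver.of_mem_minimalPrimes [Finite σ] [IsAlgClosed k]
    {I P : Ideal (MvPolynomial σ Ω)} (hI : IsDefinedOver k I) (hP : P ∈ I.minimalPrimes) :
    IsDefinedOver k P := by
  rw [isDefinedOver_iff_le_map_comap] at hI ⊢
  have := hP.1.1
  have hprime := isPrime_map_algebraMap (A := Ω) (P.comap (map (algebraMap k Ω)))
  exact hP.2 ⟨hprime, hI.trans (Ideal.map_mono (Ideal.comap_mono hP.1.2))⟩ Ideal.map_comap_le

lemma formsIn_le_span_of_isDefinedOver {P : Ideal (MvPolynomial σ Ω)} (hP : IsDefinedOver k P)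
    (d : ℕ) : formsIn P d ≤ Submodule.span Ω {f | f ∈ formsIn P d ∧ HasCoeffsIn k f} := by
  rw [isDefinedOver_iff_le_map_comap] at hP
  rintro f ⟨hfd, hfP⟩
  refine Submodule.span_mono ?_ (mem_span_range_mapCoeff (R := k) f)
  rintro _ ⟨l, rfl⟩
  exact ⟨⟨(isHomogeneous_mapCoeff l hfd).map _, mapCoeff_mem_of_mem_map l (hP hfP)⟩,
    hasCoeffsIn_iff_mem_range_map.mpr ⟨_, rfl⟩⟩

/-- A form of degree `d` in `P` costs at most `dim P_d` parameters once `P` is known. -/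
lemma exists_coeff_mem_of_mem_formsIn [Finite σ] {P : Ideal (MvPolynomial σ Ω)}
    (hP : IsDefinedOver k P) {d : ℕ} {f : MvPolynomial σ Ω} (hf : f ∈ formsIn P d) :
    ∃ c : Fin (Module.finrank Ω (formsIn P d)) → Ω,
      ∀ k', k ≤ k' → Set.range c ⊆ k' → HasCoeffsIn k' f := by
  have : FiniteDimensional Ω (formsIn P d) := Submodule.finiteDimensional_inf_left _ _
  have hspan : Submodule.span Ω {g | g ∈ formsIn P d ∧ HasCoeffsIn k g} = formsIn P d :=
    (Submodule.span_le.mpr fun _ hg ↦ hg.1).antisymm (formsIn_le_span_of_isDefinedOver hP d)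
  rw [← hspan] at hf this ⊢
  obtain ⟨g, hg, hgspan, -⟩ := Submodule.exists_fun_fin_finrank_span_eq Ω
    {g | g ∈ formsIn P d ∧ HasCoeffsIn k g}
  rw [← hgspan, Submodule.mem_span_range_iff_exists_fun] at hf
  obtain ⟨c, rfl⟩ := hf
  refine ⟨c, fun k' hk hc m ↦ ?_⟩
  simp only [coeff_sum, coeff_smul, smul_eq_mul]
  exact sum_mem fun i _ ↦ mul_mem (hc ⟨i, rfl⟩) (hk ((hg i).2 m))

end IsDefinedOver

/-! ### Krull dimension and transcendence degree -/

section Integral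

variable (A B : Type*) [CommRing A] [CommRing B] [Algebra A B] [Algebra.IsIntegral A B]

lemma ringKrullDim_le_of_isIntegral : ringKrullDim B ≤ ringKrullDim A :=
  Order.krullDim_le_of_strictMono (PrimeSpectrum.comap (algebraMap A B))
    fun p q hpq ↦ Ideal.IsIntegral.comap_lt_comap (I := p.asIdeal) (J := q.asIdeal) hpq

lemma ringKrullDim_eq_of_isIntegral [FaithfulSMul A B] : ringKrullDim B = ringKrullDim A := by
  refine (ringKrullDim_le_of_isIntegral A B).antisymm (iSup_le fun l ↦ ?_)
  have hker : RingHom.ker (algebraMap A B) ≤ (RelSeries.head l).asIdeal :=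
    (RingHom.ker_eq_bot_iff_eq_zero _).mpr
      (fun _ ↦ (FaithfulSMul.algebraMap_eq_zero_iff A B).mp) ▸ bot_le
  obtain ⟨Q, _, hQprime, hQ⟩ :=
    Ideal.exists_ideal_over_prime_of_isIntegral (RelSeries.head l).asIdeal (⊥ : Ideal B) hker
  have : Q.LiesOver (RelSeries.head l).asIdeal := ⟨hQ.symm⟩
  have : Algebra.HasGoingUp A B := .of_isIntegral
  obtain ⟨l', hl', -⟩ := Ideal.exists_ltSeries_of_hasGoingUp l Q
  exact hl' ▸ Order.LTSeries.length_le_krullDim l'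

end Integral

section FiniteType

variable (K R : Type*) [Field K] [CommRing R] [IsDomain R] [Algebra K R] [Algebra.FiniteType K R]

theorem ringKrullDim_eq_trdeg :
    ringKrullDim R = ((Algebra.trdeg K R).toENat : WithBot ℕ∞) := by
  obtain ⟨s, g, hg, hint⟩ := exists_integral_inj_algHom_of_fg K R
  algebraize [g.toRingHom]
  have : IsScalarTower K (MvPolynomial (Fin s) K) R := .of_algHom g
  have : FaithfulSMul (MvPolynomial (Fin s) K) R :=
    (faithfulSMul_iff_algebraMap_injective _ _).mpr hg
  have htrdeg := lift_trdeg_add_eq K (MvPolynomial (Fin s) K) R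
  rw [MvPolynomial.trdeg_of_isDomain, trdeg_eq_zero] at htrdeg
  have hdim := congrArg Cardinal.toENat htrdeg
  simp only [Cardinal.lift_zero, add_zero, Cardinal.toENat_lift, Cardinal.mk_fin,
    Cardinal.toENat_nat] at hdim
  rw [ringKrullDim_eq_of_isIntegral (MvPolynomial (Fin s) K) R,
    MvPolynomial.ringKrullDim_of_isNoetherianRing, ringKrullDim_eq_zero_of_field, zero_add, ← hdim,
    Nat.card_fin]
  rfl

variable {K R}

lemma card_le_ringKrullDim_of_algebraicIndependent {ι : Type*} [Finite ι] {z : ι → R}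
    (hz : AlgebraicIndependent K z) : (Nat.card ι : WithBot ℕ∞) ≤ ringKrullDim R := by
  have := Fintype.ofFinite ι
  have hcard := (OrderHomClass.mono Cardinal.toENat) hz.lift_cardinalMk_le_trdeg
  rw [Cardinal.toENat_lift, Cardinal.toENat_lift, Cardinal.mk_fintype, Cardinal.toENat_nat] at hcard
  rw [ringKrullDim_eq_trdeg K R, Nat.card_eq_fintype_card]
  exact WithBot.coe_le_coe.mpr hcard

end FiniteType

section AlgebraicHull

variable (K : Type*) {Ω : Type*} [Field K] [Field Ω] [Algebra K Ω]

/-- The relative algebraic closure of `K(B)` in `Ω`: the elements that depend algebraically on the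
parameters `B`. -/
def algebraicHull (B : Set Ω) : IntermediateField K Ω :=
  (algebraicClosure (IntermediateField.adjoin K B) Ω).restrictScalars K

open IntermediateField.algebraAdjoinAdjoin in
lemma coe_algebraicHull (B : Set Ω) :
    (algebraicHull K B : Set Ω) = (AlgebraicIndependent.matroid K Ω).closure B := by
  ext x
  rw [AlgebraicIndependent.matroid_closure_eq]
  exact mem_algebraicClosure_iff.trans (IsFractionRing.isAlgebraic_iff (Algebra.adjoin K B)
    (IntermediateField.adjoin K B) Ω (x := x)).symm

lemma algebraicHull_mono {B B' : Set Ω} (h : B ⊆ B') : algebraicHull K B ≤ algebraicHull K B' := by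
  rw [← SetLike.coe_subset_coe, coe_algebraicHull, coe_algebraicHull]
  exact Matroid.closure_subset_closure _ h

lemma subset_algebraicHull (B : Set Ω) : B ⊆ algebraicHull K B := by
  rw [coe_algebraicHull]
  exact Matroid.subset_closure _ _ (Set.subset_univ B)

instance [IsAlgClosed Ω] (B : Set Ω) : IsAlgClosed (algebraicHull K B) :=
  IsAlgClosure.isAlgClosed (K := algebraicClosure (IntermediateField.adjoin K B) Ω)
    (IntermediateField.adjoin K B)

variable {K}

lemma encard_range_le_of_forall_mem_algebraicHull {ι : Type*} {z : ι → Ω}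
    (hz : AlgebraicIndependent K z) {B : Set Ω} (hB : ∀ i, z i ∈ algebraicHull K B) :
    (Set.range z).encard ≤ B.encard := by
  have hindep : (AlgebraicIndependent.matroid K Ω).Indep (Set.range z) :=
    AlgebraicIndependent.matroid_indep_iff.mpr hz.to_subtype_range
  have hsub : Set.range z ⊆ (AlgebraicIndependent.matroid K Ω).closure B := by
    rw [← coe_algebraicHull]
    exact Set.range_subset_iff.mpr hB
  calc (Set.range z).encard
      ≤ (AlgebraicIndependent.matroid K Ω).eRk ((AlgebraicIndependent.matroid K Ω).closure B) :=
        hindep.encard_le_eRk_of_subset hsub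
    _ = (AlgebraicIndependent.matroid K Ω).eRk B := Matroid.eRk_closure_eq _ _
    _ ≤ B.encard := Matroid.eRk_le_encard _ _

theorem ringKrullDim_le_encard_of_range_subset_algebraicHull {R : Type*} [CommRing R] [Algebra K R]
    [Algebra.FiniteType K R] {f : R →ₐ[K] Ω} (hf : Function.Injective f) {B : Set Ω}
    (hB : ∀ x, f x ∈ algebraicHull K B) : ringKrullDim R ≤ (B.encard : WithBot ℕ∞) := by
  have : IsDomain R := hf.isDomain f
  obtain ⟨s, hs⟩ := exists_isTranscendenceBasis K R
  have hindep : AlgebraicIndependent K fun i : s ↦ f i := hs.1.map' hf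
  have hcard := encard_range_le_of_forall_mem_algebraicHull hindep fun i ↦ hB i
  rw [← Set.image_univ, hindep.injective.encard_image, Set.encard_univ] at hcard
  rw [ringKrullDim_eq_trdeg K R, ← hs.cardinalMk_eq_trdeg]
  exact WithBot.coe_le_coe.mpr hcard

end AlgebraicHull

/-! ### Restriction to linear subspaces -/

section LinearSubst

variable {σ τ R : Type*} [CommRing R]

/-- The linear substitution `x_j ↦ ∑ t, v t j * y_t`, that is, restriction of polynomials along the
linear map `y ↦ ∑ t, y t • v t`. -/
def linearSubst [Fintype τ] (v : τ → σ → R) : MvPolynomial σ R →ₐ[R] MvPolynomial τ R :=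
  aeval fun j ↦ ∑ t, v t j • X t

@[simp]
lemma linearSubst_X [Fintype τ] (v : τ → σ → R) (j : σ) : linearSubst v (X j) = ∑ t, v t j • X t :=
  aeval_X _ j

lemma eval_linearSubst [Fintype τ] (v : τ → σ → R) (c : τ → R) (f : MvPolynomial σ R) :
    eval c (linearSubst v f) = eval (∑ t, c t • v t) f := by
  have : ((aeval c).comp (linearSubst v) : MvPolynomial σ R →ₐ[R] R) =
      aeval (∑ t, c t • v t) := by
    ext j
    simp [mul_comm]
  exact DFunLike.congr_fun this f

/-- `v` restricts to the identity on the coordinates `e`, so that `linearSubst v` is split by the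
renaming along `e`. -/
def IsEchelon [DecidableEq τ] (e : τ → σ) (v : τ → σ → R) : Prop :=
  ∀ s t, v t (e s) = if s = t then 1 else 0

namespace IsEchelon

variable [DecidableEq τ] {e : τ → σ} {v : τ → σ → R}

lemma injective [Nontrivial R] (hv : IsEchelon e v) : Function.Injective e := fun s t hst ↦ by
  have hs : v t (e t) = 1 := by simp [hv t t]
  rw [← hst, hv s t] at hs
  by_contra hne
  simp [hne] at hs

lemma linearIndependent [Finite τ] (hv : IsEchelon e v) : LinearIndependent R v := by
  have := Fintype.ofFinite τ
  refine Fintype.linearIndependent_iff.mpr fun c hc s ↦ ?_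
  have := congrFun hc (e s)
  simpa [hv s] using this

variable [Fintype τ]

lemma linearSubst_rename (hv : IsEchelon e v) (f : MvPolynomial τ R) :
    linearSubst v (rename e f) = f := by
  have : (linearSubst v).comp (rename e) = AlgHom.id R (MvPolynomial τ R) := by
    ext s
    simp [hv s]
  exact DFunLike.congr_fun this f

lemma linearSubst_surjective (hv : IsEchelon e v) : Function.Surjective (linearSubst v) :=
  fun f ↦ ⟨rename e f, hv.linearSubst_rename f⟩

lemma ker_linearSubst (hv : IsEchelon e v) :
    RingHom.ker (linearSubst v) =
      Ideal.span (Set.range fun j ↦ X j - ∑ t, v t j • X (e t)) := by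
  set Q := Ideal.span (Set.range fun j ↦ (X j : MvPolynomial σ R) - ∑ t, v t j • X (e t))
  refine le_antisymm (fun f hf ↦ ?_) (Ideal.span_le.mpr ?_)
  · have hQ : (Ideal.Quotient.mkₐ R Q).comp ((rename e).comp (linearSubst v)) =
        Ideal.Quotient.mkₐ R Q := by
      refine MvPolynomial.algHom_ext fun j ↦ ?_
      rw [AlgHom.comp_apply, AlgHom.comp_apply, linearSubst_X, eq_comm,
        Ideal.Quotient.mkₐ_eq_mk, Ideal.Quotient.eq]
      simp only [map_sum, map_smul, rename_X]
      exact Ideal.subset_span ⟨j, rfl⟩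
    have hf' := DFunLike.congr_fun hQ f
    rw [AlgHom.comp_apply, AlgHom.comp_apply, RingHom.mem_ker.mp hf, map_zero, map_zero] at hf'
    exact Ideal.Quotient.eq_zero_iff_mem.mp hf'.symm
  · rintro _ ⟨j, rfl⟩
    simp [hv _]

end IsEchelon

end LinearSubst

section LinearHull

variable {σ k : Type*} [Field k]

lemma span_range_mk_X (P : Ideal (MvPolynomial σ k)) :
    Submodule.span k (Set.range fun j ↦ Ideal.Quotient.mkₐ k P (X j)) =
      (homogeneousSubmodule σ k 1).map (Ideal.Quotient.mkₐ k P).toLinearMap := by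
  rw [homogeneousSubmodule_one_eq_span_X, Submodule.map_span, ← Set.range_comp]
  rfl

/-- The linear hull of the variety of `P` is the linear space parametrised by `v`. -/
theorem exists_isEchelon_ker_linearSubst_le [Finite σ] (P : Ideal (MvPolynomial σ k)) {m : ℕ}
    (hm : hilbertFunction P 1 = m) :
    ∃ (e : Fin m → σ) (v : Fin m → σ → k),
      IsEchelon e v ∧ RingHom.ker (linearSubst v) ≤ P := by
  let x (j : σ) := Ideal.Quotient.mkₐ k P (X j)
  have : FiniteDimensional k (Submodule.span k (Set.range x)) :=
    FiniteDimensional.span_of_finite k (Set.finite_range x)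
  obtain rfl : Module.finrank k (Submodule.span k (Set.range x)) = m := by
    rw [span_range_mk_X, ← hm, hilbertFunction]
  obtain ⟨f, hfx, hfspan, hf⟩ := Submodule.exists_fun_fin_finrank_span_eq k (Set.range x)
  choose e he using hfx
  have hx (j : σ) : x j ∈ Submodule.span k (Set.range f) := by
    rw [hfspan]
    exact Submodule.subset_span (Set.mem_range_self j)
  let b := Module.Basis.span hf
  let v t j := b.repr ⟨x j, hx j⟩ t
  have hv : IsEchelon e v := fun s t ↦ by
    have : (⟨x (e s), hx (e s)⟩ : Submodule.span k (Set.range f)) = b s :=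
      Subtype.ext ((he s).trans (congrArg Subtype.val (Module.Basis.span_apply hf s)).symm)
    simp only [v, this, Module.Basis.repr_self, Finsupp.single_apply]
  refine ⟨e, v, hv, hv.ker_linearSubst ▸ Ideal.span_le.mpr ?_⟩
  rintro _ ⟨j, rfl⟩
  rw [SetLike.mem_coe, ← Ideal.Quotient.eq_zero_iff_mem, ← Ideal.Quotient.mkₐ_eq_mk k, map_sub,
    sub_eq_zero, map_sum]
  have hsum := congrArg Subtype.val (b.sum_repr ⟨x j, hx j⟩)
  rw [AddSubmonoidClass.coe_finsetSum] at hsum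
  refine hsum.symm.trans (Finset.sum_congr rfl fun t _ ↦ ?_)
  rw [map_smul]
  exact congrArg _ ((congrArg Subtype.val (Module.Basis.span_apply hf t)).trans (he t).symm)

end LinearHull

section Dimension

variable {R : Type*} [CommRing R]

lemma ringKrullDim_quotient_anti {I J : Ideal R} (h : I ≤ J) :
    ringKrullDim (R ⧸ J) ≤ ringKrullDim (R ⧸ I) :=
  ringKrullDim_le_of_surjective (Ideal.Quotient.factor h) (Ideal.Quotient.factor_surjective h)

lemma ringKrullDim_quotient_add_one_le {I J : Ideal R} [I.IsPrime] (h : I < J) :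
    ringKrullDim (R ⧸ J) + 1 ≤ ringKrullDim (R ⧸ I) := by
  obtain ⟨f, hfJ, hfI⟩ := SetLike.exists_of_lt h
  refine ringKrullDim_succ_le_of_surjective (Ideal.Quotient.factor h.le)
    (Ideal.Quotient.factor_surjective h.le) (r := Ideal.Quotient.mk I f) ?_ ?_
  · exact mem_nonZeroDivisors_of_ne_zero fun hf ↦ hfI (Ideal.Quotient.eq_zero_iff_mem.mp hf)
  · exact Ideal.Quotient.eq_zero_iff_mem.mpr hfJ

lemma exists_isPrime_le_ringKrullDim_quotient {I : Ideal R} {n : ℕ}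
    (h : n ≤ ringKrullDim (R ⧸ I)) :
    ∃ P : Ideal R, P.IsPrime ∧ I ≤ P ∧ n ≤ ringKrullDim (R ⧸ P) := by
  rw [ringKrullDim_quotient, Order.le_krullDim_iff] at h
  obtain ⟨l, rfl⟩ := h
  refine ⟨l.head.1.asIdeal, l.head.1.isPrime, l.head.2, ?_⟩
  rw [ringKrullDim_quotient, Order.le_krullDim_iff]
  exact ⟨⟨l.length, fun i ↦ ⟨(l i).1, LTSeries.head_le l i⟩, l.step⟩, rfl⟩

lemma ringKrullDim_quotient_ker_linearSubst {σ τ k : Type*} [Field k] [Fintype τ]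
    {v : τ → σ → k} (hv : Function.Surjective (linearSubst v)) :
    ringKrullDim (MvPolynomial σ k ⧸ RingHom.ker (linearSubst v)) = Fintype.card τ := by
  rw [ringKrullDim_eq_of_ringEquiv
      (Ideal.quotientKerAlgEquivOfSurjective (f := linearSubst v) hv).toRingEquiv,
    MvPolynomial.ringKrullDim_of_isNoetherianRing, ringKrullDim_eq_zero_of_field, zero_add,
    Nat.card_eq_fintype_card]

end Dimension

/-! ### Counting the parameters of forms sharing a curve -/

section Counting

variable {K Ω σ ι : Type*} [Field K] [Field Ω] [Algebra K Ω]

lemma isDefinedOver_top (k : IntermediateField K Ω) :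
    IsDefinedOver k (⊤ : Ideal (MvPolynomial σ Ω)) := by
  rw [← Ideal.span_singleton_one]
  refine isDefinedOver_span fun f hf m ↦ ?_
  classical
  rw [Set.mem_singleton_iff.mp hf, coeff_one]
  split_ifs
  exacts [one_mem k, zero_mem k]

variable [Finite σ]

lemma exists_hasCoeffsIn_of_mem_formsIn {P Q : Ideal (MvPolynomial σ Ω)} (hPQ : P ≤ Q)
    {B : Finset Ω} (hP : IsDefinedOver (algebraicHull K (B : Set Ω)) P) {d : ℕ}
    {f : MvPolynomial σ Ω} (hf : f ∈ formsIn P d) :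
    ∃ B' : Finset Ω, B ⊆ B' ∧ HasCoeffsIn (algebraicHull K (B' : Set Ω)) f ∧
      B'.card + hilbertFunction Q d ≤ B.card + Fintype.card (DegreeExponent σ d) := by
  classical
  obtain ⟨c, hc⟩ := exists_coeff_mem_of_mem_formsIn hP hf
  refine ⟨B ∪ Finset.univ.image c, Finset.subset_union_left, hc _ ?_ ?_, ?_⟩
  · exact algebraicHull_mono K (by simp)
  · refine Set.Subset.trans ?_ (subset_algebraicHull K _)
    simp
  · have hunion := Finset.card_union_le B (Finset.univ.image c)
    have himage := Finset.card_image_le (s := Finset.univ) (f := c)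
    rw [Finset.card_univ, Fintype.card_fin] at himage
    have hdim := hilbertFunction_add_finrank_formsIn P d
    have hanti := hilbertFunction_anti hPQ d
    omega

lemma exists_hasCoeffsIn (B : Finset Ω) {d : ℕ} {f : MvPolynomial σ Ω} (hf : f.IsHomogeneous d) :
    ∃ B' : Finset Ω, B ⊆ B' ∧ HasCoeffsIn (algebraicHull K (B' : Set Ω)) f ∧
      B'.card ≤ B.card + Fintype.card (DegreeExponent σ d) := by
  obtain ⟨B', hB, hcoeff, hcard⟩ := exists_hasCoeffsIn_of_mem_formsIn (K := K) le_rfl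
    (isDefinedOver_top (algebraicHull K (B : Set Ω))) (show f ∈ formsIn ⊤ d from ⟨hf, trivial⟩)
  exact ⟨B', hB, hcoeff, by omega⟩

lemma exists_isPrime_mem_of_notMem {k : IntermediateField K Ω} [IsAlgClosed k]
    {P Q : Ideal (MvPolynomial σ Ω)} [P.IsPrime] [Q.IsPrime] (hPQ : P ≤ Q)
    (hP : IsDefinedOver k P) {f : MvPolynomial σ Ω} (hf : HasCoeffsIn k f) (hfQ : f ∈ Q)
    (hfP : f ∉ P) :
    ∃ P' : Ideal (MvPolynomial σ Ω), P'.IsPrime ∧ P ≤ P' ∧ P' ≤ Q ∧ f ∈ P' ∧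
      IsDefinedOver k P' ∧
      ringKrullDim (MvPolynomial σ Ω ⧸ P') + 1 ≤ ringKrullDim (MvPolynomial σ Ω ⧸ P) := by
  obtain ⟨P', hP', hP'Q⟩ := Ideal.exists_minimalPrimes_le
    (sup_le hPQ ((Ideal.span_singleton_le_iff_mem Q).mpr hfQ))
  have hle : P ≤ P' := le_sup_left.trans hP'.1.2
  have hfP' : f ∈ P' := hP'.1.2 (Ideal.mem_sup_right (Ideal.mem_span_singleton_self f))
  have hdef := hP.sup (isDefinedOver_span (S := {f}) fun _ hg ↦ hg ▸ hf)
  exact ⟨P', hP'.1.1, hle, hP'Q, hfP', hdef.of_mem_minimalPrimes hP',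
    ringKrullDim_quotient_add_one_le (lt_of_le_not_ge hle fun h ↦ hfP (h hfP'))⟩

/-- The forms are chosen one at a time, keeping track of a prime `P ≤ Q` containing them. Those
in `T` cut down `P` and may be chosen freely; each of the others is a form vanishing on the variety
of `P`, which is subject to at least `hilbertFunction Q (d j)` linear conditions. -/
theorem exists_parameters [IsAlgClosed Ω] [DecidableEq ι] {F : ι → MvPolynomial σ Ω} {d : ι → ℕ}
    (hF : ∀ i, (F i).IsHomogeneous (d i)) {Q : Ideal (MvPolynomial σ Ω)} [Q.IsPrime]
    (hFQ : ∀ i, F i ∈ Q) {P₀ : Ideal (MvPolynomial σ Ω)} [P₀.IsPrime] (hP₀Q : P₀ ≤ Q)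
    {B₀ : Finset Ω} (hP₀ : IsDefinedOver (algebraicHull K (B₀ : Set Ω)) P₀) (S : Finset ι) :
    ∃ (B : Finset Ω) (P : Ideal (MvPolynomial σ Ω)) (T : Finset ι),
      P.IsPrime ∧ P ≤ Q ∧ IsDefinedOver (algebraicHull K (B : Set Ω)) P ∧
      (∀ j ∈ S, F j ∈ P) ∧ (∀ j ∈ S, HasCoeffsIn (algebraicHull K (B : Set Ω)) (F j)) ∧ T ⊆ S ∧
      ringKrullDim (MvPolynomial σ Ω ⧸ P) + T.card ≤ ringKrullDim (MvPolynomial σ Ω ⧸ P₀) ∧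
      B.card + ∑ j ∈ S \ T, hilbertFunction Q (d j) ≤
        B₀.card + ∑ j ∈ S, Fintype.card (DegreeExponent σ (d j)) := by
  induction S using Finset.induction_on with
  | empty =>
    exact ⟨B₀, P₀, ∅, ‹_›, hP₀Q, hP₀, by simp, by simp, subset_rfl, by simp, by simp⟩
  | insert i S hi ih =>
    obtain ⟨B, P, T, hprime, hPQ, hdef, hFP, hFB, hTS, hdim, hcard⟩ := ih
    have hiT : i ∉ T := fun h ↦ hi (hTS h)
    by_cases hmem : F i ∈ P
    · obtain ⟨B', hB, hcoeff, hcard'⟩ :=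
        exists_hasCoeffsIn_of_mem_formsIn hPQ hdef ⟨hF i, hmem⟩
      have hle := algebraicHull_mono K (Finset.coe_subset.mpr hB)
      refine ⟨B', P, T, hprime, hPQ, hdef.mono hle, Finset.forall_mem_insert .. |>.mpr ⟨hmem, hFP⟩,
        Finset.forall_mem_insert .. |>.mpr ⟨hcoeff, fun j hj ↦ (hFB j hj).mono hle⟩,
        hTS.trans (Finset.subset_insert _ _), hdim, ?_⟩
      rw [Finset.insert_sdiff_of_notMem _ hiT, Finset.sum_insert (by simp [hi]),
        Finset.sum_insert hi]
      omega
    · obtain ⟨B', hB, hcoeff, hcard'⟩ := exists_hasCoeffsIn (K := K) B (hF i)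
      have hle := algebraicHull_mono K (Finset.coe_subset.mpr hB)
      obtain ⟨P', hprime', hPP', hP'Q, hmem', hdef', hdim'⟩ :=
        exists_isPrime_mem_of_notMem hPQ (hdef.mono hle) hcoeff (hFQ i) hmem
      refine ⟨B', P', insert i T, hprime', hP'Q, hdef',
        Finset.forall_mem_insert .. |>.mpr ⟨hmem', fun j hj ↦ hPP' (hFP j hj)⟩,
        Finset.forall_mem_insert .. |>.mpr ⟨hcoeff, fun j hj ↦ (hFB j hj).mono hle⟩,
        Finset.insert_subset_insert _ hTS, ?_, ?_⟩
      · rw [Finset.card_insert_of_notMem hiT, Nat.cast_add, Nat.cast_one,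
          add_comm (T.card : WithBot ℕ∞), ← add_assoc]
        exact (add_le_add_left hdim' _).trans hdim
      · rw [Finset.insert_sdiff_insert, Finset.sdiff_insert_of_notMem hi, Finset.sum_insert hi]
        omega

end Counting

section LinearHull

variable {K Ω σ : Type*} [Field K] [Field Ω] [Algebra K Ω] [Fintype σ]

/-- The number `(|σ| - m) * m` is the dimension of the Grassmannian of `m`-dimensional subspaces. -/
lemma IsEchelon.exists_isDefinedOver {m : ℕ} {e : Fin m → σ} {v : Fin m → σ → Ω}
    (hv : IsEchelon e v) :
    ∃ B : Finset Ω, IsDefinedOver (algebraicHull K (B : Set Ω)) (RingHom.ker (linearSubst v)) ∧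
      B.card ≤ (Fintype.card σ - m) * m := by
  classical
  let B := ((Finset.univ.image e)ᶜ ×ˢ Finset.univ).image fun p ↦ v p.2 p.1
  have hmem (j : σ) (t : Fin m) : v t j ∈ algebraicHull K (B : Set Ω) := by
    by_cases hj : j ∈ Finset.univ.image e
    · obtain ⟨s, -, rfl⟩ := Finset.mem_image.mp hj
      rw [hv s t]
      split_ifs
      exacts [one_mem _, zero_mem _]
    · exact subset_algebraicHull K _ (Finset.mem_coe.mpr (Finset.mem_image.mpr
        ⟨(j, t), Finset.mem_product.mpr ⟨Finset.mem_compl.mpr hj, Finset.mem_univ t⟩, rfl⟩))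
  refine ⟨B, hv.ker_linearSubst ▸ isDefinedOver_span ?_, ?_⟩
  · rintro _ ⟨j, rfl⟩ n
    simp only [coeff_sub, coeff_sum, coeff_smul, coeff_X, smul_eq_mul, mul_ite, mul_one, mul_zero]
    refine sub_mem ?_ (sum_mem fun t _ ↦ ?_)
    · split_ifs
      exacts [one_mem _, zero_mem _]
    · split_ifs
      exacts [hmem j t, zero_mem _]
  · refine Finset.card_image_le.trans ?_
    rw [Finset.card_product, Finset.card_compl, Finset.card_image_of_injective _ hv.injective,
      Finset.card_univ, Fintype.card_fin]

end LinearHull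

section Arithmetic

variable {ι : Type*} [Fintype ι] [DecidableEq ι]

lemma add_card_sub_le_sum_sdiff {d : ι → ℕ} {T : Finset ι} {i₀ : ι} (hd : ∀ i, 1 ≤ d i)
    (hT : i₀ ∉ T) :
    d i₀ + (Fintype.card ι - T.card - 1) ≤ ∑ j ∈ Finset.univ \ T, d j := by
  have hi₀ : i₀ ∈ Finset.univ \ T := by simpa using hT
  have hsum := Finset.card_nsmul_le_sum ((Finset.univ \ T).erase i₀) d 1 fun i _ ↦ hd i
  rw [Finset.card_erase_of_mem hi₀, Finset.card_univ_sdiff, smul_eq_mul, mul_one] at hsum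
  rw [← Finset.add_sum_erase _ d hi₀]
  exact Nat.add_le_add_left hsum _

/-- Trading the `b * d j + 1` conditions of a curve spanning a `b`-plane (with `(b + 1) * (r - b)`
parameters) for the `d j + 1` conditions of a line (with `2 * (r - 1)` parameters) is a loss. -/
lemma sum_line_conditions_lt {d : ι → ℕ} {T : Finset ι} {i₀ : ι} {b r : ℕ} (hd : ∀ i, 1 ≤ d i)
    (hmax : ∀ i, d i ≤ d i₀) (hT : i₀ ∉ T) (hTb : T.card + 1 ≤ b) (hb : 2 ≤ b) (hbr : b ≤ r)
    (hr : r ≤ Fintype.card ι) :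
    ∑ j, (d j + 1) + (b + 1) * (r - b) <
      ∑ j ∈ Finset.univ \ T, (b * d j + 1) + 2 * (r - 1) := by
  have hout := add_card_sub_le_sum_sdiff hd hT
  have hin : ∑ j ∈ T, d j ≤ T.card * d i₀ := by
    simpa using Finset.sum_le_card_nsmul T d _ fun i _ ↦ hmax i
  have hone := hd i₀
  rw [← Finset.sum_sdiff (Finset.subset_univ T)]
  simp only [Finset.sum_add_distrib, ← Finset.mul_sum, Finset.sum_const, Finset.card_univ_sdiff,
    smul_eq_mul, mul_one]
  generalize d i₀ = D at *
  generalize ∑ j ∈ Finset.univ \ T, d j = s at *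
  generalize T.card = t at *
  obtain ⟨u, rfl⟩ := Nat.exists_eq_add_of_le hTb
  obtain ⟨v, rfl⟩ := Nat.exists_eq_add_of_le hbr
  obtain ⟨w, hw⟩ := Nat.exists_eq_add_of_le hr
  obtain ⟨E, rfl⟩ := Nat.exists_eq_add_of_le hone
  rw [hw, show t + 1 + u + v + w - t - 1 = u + v + w by omega] at hout
  rw [hw, show t + 1 + u + v - (t + 1 + u) = v by omega,
    show t + 1 + u + v - 1 = t + u + v by omega,
    show t + 1 + u + v + w - t = 1 + u + v + w by omega]
  have hmul := Nat.mul_le_mul_left (t + u) hout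
  nlinarith [Nat.zero_le (u * E), Nat.zero_le (u * w), Nat.zero_le (t * w), Nat.zero_le (u * u),
    Nat.zero_le (t * u), Nat.zero_le (u * v)]

end Arithmetic

section Line

variable {K Ω σ ι : Type*} [Field K] [Field Ω] [Algebra K Ω]
  {F : ι → MvPolynomial σ Ω} {d : ι → ℕ}

/-- The forms all vanish on the line of projective space through `v 0` and `v 1`. -/
def VanishOnLine {k : Type*} [Field k] (F : ι → MvPolynomial σ k) : Prop :=
  ∃ v : Fin 2 → σ → k, LinearIndependent k v ∧ ∀ i, linearSubst v (F i) = 0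

lemma vanishOnLine_of_isPrime [Finite σ] (P : Ideal (MvPolynomial σ Ω)) [P.IsPrime]
    (hFP : ∀ i, F i ∈ P) (hP : 2 ≤ ringKrullDim (MvPolynomial σ Ω ⧸ P))
    (hm : hilbertFunction P 1 = 2) :
    VanishOnLine F := by
  obtain ⟨e, v, hv, hle⟩ := exists_isEchelon_ker_linearSubst_le P hm
  refine ⟨v, hv.linearIndependent, fun i ↦ RingHom.mem_ker.mp ?_⟩
  suffices RingHom.ker (linearSubst v) = P from this ▸ hFP i
  refine eq_of_le_of_not_lt hle fun hlt ↦ ?_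
  have hker : (RingHom.ker (linearSubst v)).IsPrime := RingHom.ker_isPrime _
  have hdim := ringKrullDim_quotient_add_one_le hlt
  rw [ringKrullDim_quotient_ker_linearSubst hv.linearSubst_surjective, Fintype.card_fin] at hdim
  have := (add_le_add_left hP 1).trans hdim
  norm_cast at this

variable [IsAlgClosed Ω] [Fintype σ] [Fintype ι]

lemma exists_parameters_of_isPrime [DecidableEq ι] {i₀ : ι} (hF : ∀ i, (F i).IsHomogeneous (d i))
    (P : Ideal (MvPolynomial σ Ω)) [P.IsPrime] (hFP : ∀ i, F i ∈ P)
    (hP : 2 ≤ ringKrullDim (MvPolynomial σ Ω ⧸ P))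
    (hF₂ : ringKrullDim (MvPolynomial σ Ω ⧸ Ideal.span (F '' {i₀}ᶜ)) ≤ 2) :
    ∃ (B : Finset Ω) (T : Finset ι), (∀ i, HasCoeffsIn (algebraicHull K (B : Set Ω)) (F i)) ∧
      i₀ ∉ T ∧ T.card + 2 ≤ hilbertFunction P 1 ∧
      B.card + ∑ j ∈ Finset.univ \ T, hilbertFunction P (d j) ≤
        (Fintype.card σ - hilbertFunction P 1) * hilbertFunction P 1 +
          ∑ j, Fintype.card (DegreeExponent σ (d j)) := by
  obtain ⟨e, v, hv, hle⟩ := exists_isEchelon_ker_linearSubst_le P rfl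
  obtain ⟨B₀, hB₀, hB₀card⟩ := hv.exists_isDefinedOver (K := K)
  have hker : (RingHom.ker (linearSubst v)).IsPrime := RingHom.ker_isPrime _
  obtain ⟨B₁, P₁, T, hP₁, hP₁P, hdef, hmem, hcoeff, hTS, hdim, hcard⟩ :=
    exists_parameters hF hFP hle hB₀ (Finset.univ.erase i₀)
  rw [ringKrullDim_quotient_ker_linearSubst hv.linearSubst_surjective, Fintype.card_fin] at hdim
  have heq : P₁ = P := by
    refine eq_of_le_of_not_lt hP₁P fun hlt ↦ ?_
    have hspan : Ideal.span (F '' {i₀}ᶜ) ≤ P₁ := by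
      rw [Ideal.span_le]
      rintro _ ⟨i, hi, rfl⟩
      exact hmem i (Finset.mem_erase.mpr ⟨hi, Finset.mem_univ i⟩)
    have := (add_le_add_left hP 1).trans <| (ringKrullDim_quotient_add_one_le hlt).trans <|
      (ringKrullDim_quotient_anti hspan).trans hF₂
    norm_cast at this
  subst heq
  obtain ⟨B, hB, hcoeff₀, hcard₀⟩ :=
    exists_hasCoeffsIn_of_mem_formsIn hP₁P hdef ⟨hF i₀, hFP i₀⟩
  have hi₀ : i₀ ∉ T := fun h ↦ Finset.notMem_erase i₀ _ (hTS h)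
  refine ⟨B, T, fun i ↦ ?_, hi₀, ?_, ?_⟩
  · by_cases hi : i = i₀
    · exact hi ▸ hcoeff₀
    · exact (hcoeff i (Finset.mem_erase.mpr ⟨hi, Finset.mem_univ i⟩)).mono
        (algebraicHull_mono K (Finset.coe_subset.mpr hB))
  · have := (add_le_add_left hP (T.card : WithBot ℕ∞)).trans hdim
    rw [add_comm]
    exact_mod_cast this
  · rw [Finset.erase_sdiff_comm] at hcard
    rw [← Finset.add_sum_erase _ _ (show i₀ ∈ Finset.univ \ T by simpa using hi₀),
      ← Finset.add_sum_erase _ _ (Finset.mem_univ i₀)]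
    omega

theorem vanishOnLine_or_exists_parameters {i₀ : ι} (hF : ∀ i, (F i).IsHomogeneous (d i))
    (hd : ∀ i, 1 ≤ d i) (hmax : ∀ i, d i ≤ d i₀) (hσ : Fintype.card σ ≤ Fintype.card ι + 1)
    (hF₁ : 2 ≤ ringKrullDim (MvPolynomial σ Ω ⧸ Ideal.span (Set.range F)))
    (hF₂ : ringKrullDim (MvPolynomial σ Ω ⧸ Ideal.span (F '' {i₀}ᶜ)) ≤ 2) :
    VanishOnLine F ∨
      ∃ B : Finset Ω, (∀ i, HasCoeffsIn (algebraicHull K (B : Set Ω)) (F i)) ∧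
        B.card + ∑ j, (d j + 1) <
          ∑ j, Fintype.card (DegreeExponent σ (d j)) + 2 * (Fintype.card σ - 2) := by
  classical
  obtain ⟨P, hP, hspan, hdim⟩ := exists_isPrime_le_ringKrullDim_quotient hF₁
  have hFP (i : ι) : F i ∈ P := hspan (Ideal.subset_span ⟨i, rfl⟩)
  obtain ⟨B, T, hcoeff, hi₀, hT, hcard⟩ :=
    exists_parameters_of_isPrime (K := K) hF P hFP hdim hF₂
  obtain hm | hm : hilbertFunction P 1 = 2 ∨ 3 ≤ hilbertFunction P 1 := by omega
  · exact .inl (vanishOnLine_of_isPrime P hFP hdim hm)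
  obtain ⟨b, hb⟩ := Nat.exists_eq_add_of_le' (show 1 ≤ hilbertFunction P 1 by omega)
  have hbσ : b + 1 ≤ Fintype.card σ := by
    obtain ⟨e, v, hv, -⟩ := exists_isEchelon_ker_linearSubst_le P hb
    simpa using Fintype.card_le_of_injective e hv.injective
  have hhilbert : ∑ j ∈ Finset.univ \ T, (b * d j + 1) ≤
      ∑ j ∈ Finset.univ \ T, hilbertFunction P (d j) :=
    Finset.sum_le_sum fun j _ ↦ mul_add_one_le_hilbertFunction P hb.ge (d j)
  have harith := sum_line_conditions_lt (r := Fintype.card σ - 1) hd hmax hi₀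
    (by omega) (show 2 ≤ b by omega) (by omega) (by omega)
  rw [hb, mul_comm, show Fintype.card σ - (b + 1) = Fintype.card σ - 1 - b by omega] at hcard
  rw [show Fintype.card σ - 1 - 1 = Fintype.card σ - 2 by omega] at harith
  exact .inr ⟨B, hcoeff, by omega⟩

end Line

/-! ### Elimination -/

section MaximalMinors

variable {A E ι κ : Type*} [CommRing A] [Field E] [Fintype ι] [DecidableEq ι]

/-- The determinants of the square matrices formed by rows of `w`, repetitions allowed. -/
def maximalMinors (w : κ → ι → A) : Set A :=
  Set.range fun s : ι → κ ↦ (Matrix.of fun i ↦ w (s i)).det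

lemma span_range_eq_top_iff_det_ne_zero (w : ι → ι → E) :
    Submodule.span E (Set.range w) = ⊤ ↔ (Matrix.of w).det ≠ 0 := by
  rw [← isUnit_iff_ne_zero, ← Matrix.isUnit_iff_isUnit_det,
    ← Matrix.linearIndependent_rows_iff_isUnit]
  exact ⟨fun h ↦ linearIndependent_of_top_le_span_of_card_eq_finrank h.ge (by simp),
    fun h ↦ h.span_eq_top_of_card_eq_finrank' (by simp)⟩

lemma span_range_comp_eq_top_iff (φ : A →+* E) (w : κ → ι → A) :
    Submodule.span E (Set.range fun r ↦ φ ∘ w r) = ⊤ ↔ ∃ a ∈ maximalMinors w, φ a ≠ 0 := by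
  have hdet (s : ι → κ) : φ (Matrix.of fun i ↦ w (s i)).det =
      (Matrix.of fun i ↦ φ ∘ w (s i)).det := φ.map_det _
  simp only [maximalMinors, Set.exists_range_iff, hdet, ← span_range_eq_top_iff_det_ne_zero]
  constructor
  · intro h
    obtain ⟨κ', s, -, hspan, hli⟩ := exists_linearIndependent' E fun r ↦ φ ∘ w r
    let b := Module.Basis.mk hli (hspan.trans h).ge
    let e := b.indexEquiv (Pi.basisFun E ι)
    refine ⟨s ∘ e.symm, ?_⟩
    rw [← h, ← hspan]
    exact congrArg _ (e.symm.surjective.range_comp ((fun r ↦ φ ∘ w r) ∘ s))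
  · rintro ⟨s, hs⟩
    refine top_le_iff.mp (hs ▸ Submodule.span_mono ?_)
    rintro _ ⟨i, rfl⟩
    exact ⟨s i, rfl⟩

end MaximalMinors

section Macaulay

variable {σ J R A E : Type*} [CommRing R] [CommRing A] [Field E]

/-- The coefficients of a polynomial in degree `N`. -/
def degreeCoeffs (N : ℕ) : MvPolynomial σ R →ₗ[R] DegreeExponent σ N → R :=
  LinearMap.pi fun m ↦ lcoeff R m.1

/-- The rows of the Macaulay matrix in degree `N` of forms of degrees `e j`. -/
abbrev MacaulayRow (σ : Type*) (e : J → ℕ) (N : ℕ) : Type _ :=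
  {p : (σ →₀ ℕ) × J // p.1.degree + e p.2 = N}

/-- The products of degree `N` of a monomial with one of the forms `G j` of degree `e j`. -/
def macaulayProduct (G : J → MvPolynomial σ R) {e : J → ℕ} {N : ℕ} (p : MacaulayRow σ e N) :
    MvPolynomial σ R :=
  monomial p.1.1 1 * G p.1.2

/-- The Macaulay matrix in degree `N` of the forms `G j` of degrees `e j`. -/
def macaulayMatrix (G : J → MvPolynomial σ R) (e : J → ℕ) (N : ℕ) (p : MacaulayRow σ e N) :
    DegreeExponent σ N → R :=
  degreeCoeffs N (macaulayProduct G p)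

/-- All maximal minors of the Macaulay matrices of the forms `G j` of degrees `e j`. -/
def macaulayMinors [Finite σ] (G : J → MvPolynomial σ R) (e : J → ℕ) : Set R :=
  open Classical in ⋃ N, maximalMinors (macaulayMatrix G e N)

lemma macaulayMatrix_map (φ : A →+* R) (G : J → MvPolynomial σ A) (e : J → ℕ) (N : ℕ)
    (p : MacaulayRow σ e N) :
    macaulayMatrix (fun j ↦ map φ (G j)) e N p = φ ∘ macaulayMatrix G e N p := by
  ext m
  simp only [macaulayMatrix, macaulayProduct, degreeCoeffs, LinearMap.pi_apply, lcoeff_apply,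
    Function.comp_apply]
  rw [← coeff_map, map_mul, map_monomial, map_one φ]

variable {G : J → MvPolynomial σ R} {e : J → ℕ}

lemma homogeneousComponent_monomial_mul (hG : ∀ j, (G j).IsHomogeneous (e j)) (N : ℕ)
    (α : σ →₀ ℕ) (j : J) :
    homogeneousComponent N (monomial α 1 * G j) =
      if α.degree + e j = N then monomial α 1 * G j else 0 := by
  rw [homogeneousComponent_of_mem ((isHomogeneous_monomial _ rfl).mul (hG j))]
  simp only [eq_comm]

lemma restrictScalars_span_range (G : J → MvPolynomial σ R) :
    (Ideal.span (Set.range G)).restrictScalars R =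
      Submodule.span R (Set.range fun p : (σ →₀ ℕ) × J ↦ monomial p.1 1 * G p.2) := by
  rw [← Submodule.span_smul_of_span_eq_top (s := Set.range fun α ↦ monomial α (1 : R)),
    ← Set.image2_smul, Set.image2_range]
  · rfl
  · simpa using (basisMonomials σ R).span_eq

lemma map_homogeneousComponent_span (hG : ∀ j, (G j).IsHomogeneous (e j)) (N : ℕ) :
    ((Ideal.span (Set.range G)).restrictScalars R).map (homogeneousComponent N) =
      Submodule.span R (Set.range fun p : MacaulayRow σ e N ↦ macaulayProduct G p) := by
  rw [restrictScalars_span_range, Submodule.map_span, ← Set.range_comp]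
  refine le_antisymm (Submodule.span_le.mpr ?_) (Submodule.span_mono ?_)
  · rintro _ ⟨p, rfl⟩
    simp only [Function.comp_apply, homogeneousComponent_monomial_mul hG]
    split_ifs with hp
    · exact Submodule.subset_span ⟨⟨p, hp⟩, rfl⟩
    · exact zero_mem _
  · rintro _ ⟨p, rfl⟩
    exact ⟨p.1, by simp [homogeneousComponent_monomial_mul hG, p.2, macaulayProduct]⟩

lemma map_degreeCoeffs_span (hG : ∀ j, (G j).IsHomogeneous (e j)) (N : ℕ) :
    ((Ideal.span (Set.range G)).restrictScalars R).map (degreeCoeffs N) =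
      Submodule.span R (Set.range (macaulayMatrix G e N)) := by
  have hcomp : degreeCoeffs (σ := σ) (R := R) N ∘ₗ homogeneousComponent N = degreeCoeffs N := by
    ext f m
    simp [degreeCoeffs, coeff_homogeneousComponent, m.2]
  rw [← hcomp, Submodule.map_comp, map_homogeneousComponent_span hG, Submodule.map_span,
    ← Set.range_comp]
  rfl

attribute [local instance] MvPolynomial.gradedAlgebra

lemma isHomogeneous_span_range (hG : ∀ j, (G j).IsHomogeneous (e j)) :
    (Ideal.span (Set.range G)).IsHomogeneous (homogeneousSubmodule σ R) :=
  Ideal.homogeneous_span _ _ <| by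
    rintro _ ⟨j, rfl⟩
    exact ⟨e j, hG j⟩

lemma homogeneousComponent_mem {I : Ideal (MvPolynomial σ R)}
    (hI : I.IsHomogeneous (homogeneousSubmodule σ R)) {f : MvPolynomial σ R} (hf : f ∈ I) (N : ℕ) :
    homogeneousComponent N f ∈ I :=
  decomposition.decompose'_apply f N ▸ hI N hf

lemma pow_idealOfVars_le_iff [Finite σ] {I : Ideal (MvPolynomial σ R)}
    (hI : I.IsHomogeneous (homogeneousSubmodule σ R)) (N : ℕ) :
    idealOfVars σ R ^ N ≤ I ↔ (I.restrictScalars R).map (degreeCoeffs N) = ⊤ := by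
  classical
  rw [pow_idealOfVars_eq_span, Ideal.span_le, eq_top_iff, ← (Pi.basisFun R _).span_eq,
    Submodule.span_le, Set.range_subset_iff, Set.image_subset_iff]
  constructor
  · intro h m
    refine ⟨monomial m.1 1, h m.2, ?_⟩
    ext m'
    simp [degreeCoeffs, coeff_monomial, Pi.single_apply, Subtype.ext_iff, eq_comm]
  · intro h m hm
    obtain ⟨f, hf, hfm⟩ := h ⟨m, hm⟩
    have hcomp : homogeneousComponent N f = monomial m 1 := by
      ext m'
      rw [coeff_homogeneousComponent, coeff_monomial]
      split_ifs with hm' heq heq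
      · simpa [degreeCoeffs, heq] using congrFun hfm ⟨m', hm'⟩
      · simpa [degreeCoeffs, Subtype.ext_iff, Ne.symm heq] using congrFun hfm ⟨m', hm'⟩
      · exact absurd (heq ▸ hm) hm'
      · rfl
    exact Set.mem_preimage.mpr (hcomp ▸ homogeneousComponent_mem hI hf N)

theorem exists_pow_idealOfVars_le_span_iff [Finite σ] {G : J → MvPolynomial σ A}
    (hG : ∀ j, (G j).IsHomogeneous (e j)) (φ : A →+* E) :
    (∃ N, idealOfVars σ E ^ N ≤ Ideal.span (Set.range fun j ↦ map φ (G j))) ↔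
      ∃ a ∈ macaulayMinors G e, φ a ≠ 0 := by
  classical
  have hG' (j : J) : (map φ (G j)).IsHomogeneous (e j) := (hG j).map φ
  simp only [pow_idealOfVars_le_iff (isHomogeneous_span_range hG'), map_degreeCoeffs_span hG',
    funext (macaulayMatrix_map φ G e _), span_range_comp_eq_top_iff, macaulayMinors,
    Set.mem_iUnion, exists_and_right, exists_comm (α := ℕ)]

end Macaulay

section Nullstellensatz

variable {σ E : Type*} [Field E] [IsAlgClosed E] [Finite σ]

lemma exists_pow_idealOfVars_le_iff (I : Ideal (MvPolynomial σ E)) :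
    (∃ N, idealOfVars σ E ^ N ≤ I) ↔ ∀ ξ : σ → E, (∀ f ∈ I, eval ξ f = 0) → ξ = 0 := by
  constructor
  · rintro ⟨N, hN⟩ ξ hξ
    ext i
    have hX := hξ _ (hN (Ideal.pow_mem_pow (Ideal.subset_span (Set.mem_range_self i)) N))
    rw [map_pow, eval_X] at hX
    exact eq_zero_of_pow_eq_zero hX
  · intro h
    refine Ideal.exists_pow_le_of_le_radical_of_fg ?_ (idealOfVars_fg σ E)
    rw [← vanishingIdeal_zeroLocus_eq_radical (K := E), idealOfVars, Ideal.span_le]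
    rintro _ ⟨i, rfl⟩ ξ hξ
    have hzero := h ξ fun f hf ↦ by simpa using hξ f hf
    simp [hzero]

end Nullstellensatz

/-! ### Dimension and linear sections -/

attribute [local instance] MvPolynomial.gradedAlgebra

section LinearForm

variable {K R σ J : Type*} [CommRing R] [Fintype σ]

/-- The linear form `∑ i, c i * X i`. -/
def linearForm (c : σ → R) : MvPolynomial σ R :=
  ∑ i, c i • X i

lemma isHomogeneous_linearForm (c : σ → R) : (linearForm c).IsHomogeneous 1 :=
  IsHomogeneous.sum _ _ _ fun i _ ↦ (homogeneousSubmodule σ R 1).smul_mem _ (isHomogeneous_X R i)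

lemma map_linearForm {S : Type*} [CommRing S] (φ : R →+* S) (c : σ → R) :
    map φ (linearForm c) = linearForm (φ ∘ c) := by
  simp [linearForm, smul_eq_C_mul]

/-- The forms `G j` together with the linear forms with coefficients `c s`. -/
abbrev adjoinLinearForms {h : ℕ} (G : J → MvPolynomial σ R) (c : Fin h → σ → R) :
    J ⊕ Fin h → MvPolynomial σ R :=
  Sum.elim G fun s ↦ linearForm (c s)

lemma isHomogeneous_adjoinLinearForms {h : ℕ} {G : J → MvPolynomial σ R} {e : J → ℕ}
    (hG : ∀ j, (G j).IsHomogeneous (e j)) (c : Fin h → σ → R) (j : J ⊕ Fin h) :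
    (adjoinLinearForms G c j).IsHomogeneous (Sum.elim e 1 j) := by
  cases j with
  | inl j => exact hG j
  | inr s => exact isHomogeneous_linearForm (c s)

end LinearForm

section Finiteness

variable {E σ J : Type*} [Field E] [Fintype σ] {h N : ℕ} {G : J → MvPolynomial σ E} {e : J → ℕ}
  {c : Fin h → σ → E}

variable {R : Type*} [CommRing R] [Algebra E R] (π : MvPolynomial σ E →ₐ[E] R)

lemma map_mem_span_of_isHomogeneous {A : Type*} [CommRing A] [Algebra E A] [Algebra A R]
    [IsScalarTower E A R] (hG : ∀ j, (G j).IsHomogeneous (e j))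
    (hN : idealOfVars σ E ^ N ≤ Ideal.span (Set.range (adjoinLinearForms G c)))
    (hπG : ∀ j, π (G j) = 0) (hπc : ∀ s, π (linearForm (c s)) ∈ (algebraMap A R).range) {d : ℕ}
    {f : MvPolynomial σ E} (hf : f.IsHomogeneous d) :
    π f ∈ Submodule.span A ((fun m ↦ π (monomial m 1)) '' {m | m.degree < N}) := by
  induction d using Nat.strong_induction_on generalizing f with
  | _ d ih =>
    have hdeg {m : σ →₀ ℕ} (hm : coeff m f ≠ 0) : m.degree = d :=
      (Finsupp.degree_eq_weight_one (R := ℕ)).symm ▸ hf hm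
    set W := Submodule.span A ((fun m ↦ π (monomial m 1)) '' {m | m.degree < N})
    obtain hd | hd := lt_or_ge d N
    · rw [f.as_sum, map_sum]
      refine sum_mem fun m hm ↦ ?_
      rw [← mul_one (coeff m f), ← smul_eq_mul, ← smul_monomial, map_smul]
      exact (W.restrictScalars E).smul_mem _
        (Submodule.subset_span ⟨m, (hdeg (mem_support_iff.mp hm)).trans_lt hd, rfl⟩)
    · have hfN : f ∈ Ideal.span (Set.range (adjoinLinearForms G c)) :=
        hN <| (mem_pow_idealOfVars_iff' N f).mpr fun m hm ↦ by
          by_contra hne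
          exact hm.not_ge ((hdeg hne).symm ▸ hd)
      have hrows : f ∈ Submodule.span E
          (Set.range (macaulayProduct (adjoinLinearForms G c) (e := Sum.elim e 1) (N := d))) := by
        rw [← map_homogeneousComponent_span (isHomogeneous_adjoinLinearForms hG c)]
        exact ⟨f, hfN, by simp [homogeneousComponent_of_mem hf]⟩
      refine Submodule.span_le (p := (W.restrictScalars E).comap π.toLinearMap).mpr ?_ hrows
      rintro _ ⟨⟨⟨α, j | s⟩, hα⟩, rfl⟩
      · simp [macaulayProduct, hπG]
      · obtain ⟨a, ha⟩ := hπc s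
        have hα' : α.degree < d := Nat.lt_of_succ_le hα.le
        simp only [macaulayProduct, Sum.elim_inr, SetLike.mem_coe, Submodule.mem_comap,
          AlgHom.toLinearMap_apply, map_mul, ← ha]
        rw [mul_comm, ← Algebra.smul_def]
        exact W.smul_mem a (ih _ hα' (isHomogeneous_monomial _ rfl))

lemma ringKrullDim_le_of_pow_idealOfVars_le (hG : ∀ j, (G j).IsHomogeneous (e j))
    (hN : idealOfVars σ E ^ N ≤ Ideal.span (Set.range (adjoinLinearForms G c)))
    (hπ : Function.Surjective π) (hπG : ∀ j, π (G j) = 0) : ringKrullDim R ≤ h := by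
  let φ : MvPolynomial (Fin h) E →ₐ[E] R := aeval fun s ↦ π (linearForm (c s))
  let := φ.toAlgebra
  have : IsScalarTower E (MvPolynomial (Fin h) E) R := IsScalarTower.of_algHom φ
  have hfinite := ((Finsupp.finite_of_degree_le (σ := σ) N).subset
    fun m (hm : m.degree < N) ↦ hm.le).image fun m ↦ π (monomial m 1)
  have : Module.Finite (MvPolynomial (Fin h) E) R := by
    refine ⟨hfinite.toFinset, top_le_iff.mp fun x _ ↦ ?_⟩
    obtain ⟨f, rfl⟩ := hπ x
    rw [hfinite.coe_toFinset, ← sum_homogeneousComponent f, map_sum]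
    exact sum_mem fun d _ ↦ map_mem_span_of_isHomogeneous π hG hN hπG
      (fun s ↦ ⟨X s, aeval_X _ s⟩) (homogeneousComponent_isHomogeneous d f)
  refine (ringKrullDim_le_of_isIntegral (MvPolynomial (Fin h) E) R).trans_eq ?_
  simp

end Finiteness

section Homogeneous

variable {E σ : Type*} [Field E]

lemma le_idealOfVars {P : Ideal (MvPolynomial σ E)}
    (hP : P.IsHomogeneous (homogeneousSubmodule σ E)) (hP' : P ≠ ⊤) : P ≤ idealOfVars σ E := by
  intro f hf
  rw [← pow_one (idealOfVars σ E), mem_pow_idealOfVars_iff']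
  intro m hm
  obtain rfl : m = 0 := by simpa [Finsupp.degree_eq_zero_iff] using hm
  by_contra hne
  have hC := homogeneousComponent_mem hP hf 0
  rw [homogeneousComponent_zero] at hC
  exact hP' (P.eq_top_of_isUnit_mem hC ((isUnit_iff_ne_zero.mpr hne).map C))

lemma isHomogeneous_of_mem_minimalPrimes {I P : Ideal (MvPolynomial σ E)}
    (hI : I.IsHomogeneous (homogeneousSubmodule σ E)) (hP : P ∈ I.minimalPrimes) :
    P.IsHomogeneous (homogeneousSubmodule σ E) := by
  rw [Ideal.IsHomogeneous.iff_eq]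
  refine (Ideal.toIdeal_homogeneousCore_le _ P).antisymm
    (hP.2 ⟨hP.1.1.homogeneousCore, ?_⟩ (Ideal.toIdeal_homogeneousCore_le _ P))
  rw [← hI.toIdeal_homogeneousCore_eq_self]
  exact Ideal.homogeneousCore_mono _ hP.1.2

lemma isMaximal_idealOfVars : (idealOfVars σ E).IsMaximal := by
  have hker : idealOfVars σ E = RingHom.ker (constantCoeff (σ := σ) (R := E)) := by
    ext f
    rw [← pow_one (idealOfVars σ E), mem_pow_idealOfVars_iff', RingHom.mem_ker]
    simp [Finsupp.degree_eq_zero_iff, constantCoeff_eq]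
  rw [hker]
  exact RingHom.ker_isMaximal_of_surjective _ fun a ↦ ⟨C a, constantCoeff_C _ a⟩

lemma ringKrullDim_quotient_sup_le {I : Ideal (MvPolynomial σ E)} {h : ℕ}
    (hdim : ringKrullDim (MvPolynomial σ E ⧸ I) ≤ (h + 1 : ℕ)) {f : MvPolynomial σ E}
    (hf : ∀ P ∈ I.minimalPrimes, ¬ idealOfVars σ E ≤ P → f ∉ P) :
    ringKrullDim (MvPolynomial σ E ⧸ I ⊔ Ideal.span {f}) ≤ h := by
  by_contra hlt
  obtain ⟨Q, hQ, hle, hQdim⟩ := exists_isPrime_le_ringKrullDim_quotient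
    (n := h + 1)
    (by exact_mod_cast ENat.WithBot.add_one_le_iff.mpr (not_le.mp hlt))
  obtain ⟨P, hP, hPQ⟩ := Ideal.exists_minimalPrimes_le (le_sup_left.trans hle)
  have := hP.1.1
  by_cases hvars : idealOfVars σ E ≤ P
  · have hmax := isMaximal_idealOfVars.eq_of_le hQ.ne_top (hvars.trans hPQ)
    have : Q.IsMaximal := hmax ▸ isMaximal_idealOfVars
    let := Ideal.Quotient.field Q
    rw [ringKrullDim_eq_zero_of_field] at hQdim
    norm_cast at hQdim
  · have hPQ' : P < Q := lt_of_le_of_ne hPQ fun h ↦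
      hf P hP hvars (h ▸ hle (Ideal.mem_sup_right (Ideal.mem_span_singleton_self f)))
    have := (add_le_add_left hQdim 1).trans <| (ringKrullDim_quotient_add_one_le hPQ').trans <|
      (ringKrullDim_quotient_anti hP.1.2).trans hdim
    norm_cast at this
    omega

lemma exists_pow_idealOfVars_le_of_ringKrullDim_le_zero [Finite σ] {I : Ideal (MvPolynomial σ E)}
    (hI : I.IsHomogeneous (homogeneousSubmodule σ E))
    (hdim : ringKrullDim (MvPolynomial σ E ⧸ I) ≤ 0) : ∃ N, idealOfVars σ E ^ N ≤ I := by
  refine Ideal.exists_pow_le_of_le_radical_of_fg ?_ (idealOfVars_fg σ E)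
  rw [← Ideal.sInf_minimalPrimes]
  refine le_sInf fun P hP ↦ ?_
  have := hP.1.1
  have := isMaximal_idealOfVars (E := E) (σ := σ)
  obtain hlt | heq :=
    (le_idealOfVars (isHomogeneous_of_mem_minimalPrimes hI hP) hP.1.1.ne_top).lt_or_eq
  · have hdim' := (ringKrullDim_quotient_add_one_le hlt).trans <|
      (ringKrullDim_quotient_anti hP.1.2).trans hdim
    have := Ideal.Quotient.nontrivial_iff.mpr this.ne_top
    have hnonneg := ringKrullDim_nonneg_of_nontrivial (R := MvPolynomial σ E ⧸ idealOfVars σ E)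
    have := (add_le_add_left hnonneg 1).trans hdim'
    norm_cast at this
  · exact heq.ge

lemma exists_linearForm_notMem {K : Type*} [Field K] [Algebra K E] [Infinite K] [Fintype σ]
    {S : Set (Ideal (MvPolynomial σ E))} (hS : S.Finite) (hlt : ∀ P ∈ S, ¬ idealOfVars σ E ≤ P) :
    ∃ c : σ → K, ∀ P ∈ S, linearForm (algebraMap K E ∘ c) ∉ P := by
  classical
  let L : (σ → K) →ₗ[K] MvPolynomial σ E :=
    Fintype.linearCombination K (X : σ → MvPolynomial σ E)
  let V (P : Ideal (MvPolynomial σ E)) : Subspace K (σ → K) := (P.restrictScalars K).comap L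
  have htop : ⊤ ∉ hS.toFinset.image V := by
    simp only [Finset.mem_image, Set.Finite.mem_toFinset, not_exists, not_and]
    refine fun P hP heq ↦ hlt P hP (Ideal.span_le.mpr ?_)
    rintro _ ⟨i, rfl⟩
    have hi : Pi.single i 1 ∈ V P := heq ▸ Submodule.mem_top
    simpa [V, L, Fintype.linearCombination_apply_single] using hi
  obtain ⟨c, hc⟩ := (Set.ne_univ_iff_exists_notMem _).mp
    (Subspace.biUnion_ne_univ_of_top_notMem htop)
  refine ⟨c, fun P hP hcP ↦ hc (Set.mem_biUnion
    (Finset.mem_image_of_mem V (hS.mem_toFinset.mpr hP)) ?_)⟩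
  simpa [V, L, linearForm, Fintype.linearCombination_apply] using hcP

end Homogeneous

section Sections

variable {K E σ J : Type*} [Field K] [Infinite K] [Field E] [Algebra K E] [Fintype σ]

lemma exists_pow_idealOfVars_le_sup {I : Ideal (MvPolynomial σ E)}
    (hI : I.IsHomogeneous (homogeneousSubmodule σ E)) {h : ℕ}
    (hdim : ringKrullDim (MvPolynomial σ E ⧸ I) ≤ h) :
    ∃ (c : Fin h → σ → K) (N : ℕ), idealOfVars σ E ^ N ≤
      I ⊔ Ideal.span (Set.range fun s ↦ linearForm (algebraMap K E ∘ c s)) := by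
  induction h generalizing I with
  | zero =>
    obtain ⟨N, hN⟩ := exists_pow_idealOfVars_le_of_ringKrullDim_le_zero hI (mod_cast hdim)
    exact ⟨Fin.elim0, N, hN.trans le_sup_left⟩
  | succ h ih =>
    obtain ⟨c₀, hc₀⟩ := exists_linearForm_notMem (K := K)
      (S := {P | P ∈ I.minimalPrimes ∧ ¬ idealOfVars σ E ≤ P})
      (I.finite_minimalPrimes_of_isNoetherianRing.subset fun P hP ↦ hP.1) fun P hP ↦ hP.2
    obtain ⟨c, N, hN⟩ := ih
      (hI.sup (Ideal.homogeneous_span _ _ fun f hf ↦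
        ⟨1, Set.mem_singleton_iff.mp hf ▸ isHomogeneous_linearForm _⟩))
      (ringKrullDim_quotient_sup_le hdim fun P hP hP' ↦ hc₀ P ⟨hP, hP'⟩)
    refine ⟨Fin.cons c₀ c, N, hN.trans ?_⟩
    rw [sup_assoc, ← Ideal.span_union]
    refine sup_le_sup_left (Ideal.span_mono ?_) I
    rintro _ (rfl | ⟨s, rfl⟩)
    exacts [⟨0, rfl⟩, ⟨s.succ, rfl⟩]

lemma exists_adjoinLinearForms_pow_idealOfVars_le {G : J → MvPolynomial σ E} {e : J → ℕ}
    (hG : ∀ j, (G j).IsHomogeneous (e j)) {h : ℕ}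
    (hdim : ringKrullDim (MvPolynomial σ E ⧸ Ideal.span (Set.range G)) ≤ h) :
    ∃ (c : Fin h → σ → K) (N : ℕ), idealOfVars σ E ^ N ≤
      Ideal.span (Set.range (adjoinLinearForms G fun s ↦ algebraMap K E ∘ c s)) := by
  obtain ⟨c, N, hN⟩ := exists_pow_idealOfVars_le_sup (K := K) (isHomogeneous_span_range hG) hdim
  exact ⟨c, N, by rwa [adjoinLinearForms, Set.Sum.elim_range, Ideal.span_union]⟩

variable {A : Type*} [CommRing A] [Algebra K A]

variable (K) in
/-- Equations in the coefficient ring `A` for the locus over which the affine cone cut out by the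
forms `G j` of degree `e j` has dimension greater than `h`: the Macaulay minors of all the families
obtained by adjoining `h` linear forms with coefficients in `K`. -/
def dimensionEquations (G : J → MvPolynomial σ A) (e : J → ℕ) (h : ℕ) : Set A :=
  ⋃ c : Fin h → σ → K,
    macaulayMinors (adjoinLinearForms G fun s ↦ algebraMap K A ∘ c s) (Sum.elim e 1)

lemma lt_ringKrullDim_iff_dimensionEquations {G : J → MvPolynomial σ A} {e : J → ℕ}
    (hG : ∀ j, (G j).IsHomogeneous (e j)) (φ : A →ₐ[K] E) (h : ℕ) :
    (h : WithBot ℕ∞) <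
        ringKrullDim (MvPolynomial σ E ⧸ Ideal.span (Set.range fun j ↦ map (φ : A →+* E) (G j))) ↔
      ∀ a ∈ dimensionEquations K G e h, φ a = 0 := by
  have hmap (c : Fin h → σ → K) :
      (fun j ↦ map (φ : A →+* E) (adjoinLinearForms G (fun s ↦ algebraMap K A ∘ c s) j)) =
        adjoinLinearForms (fun j ↦ map (φ : A →+* E) (G j)) fun s ↦ algebraMap K E ∘ c s := by
    ext1 (j | s)
    · rfl
    · simp [adjoinLinearForms, map_linearForm, Function.comp_def]
  have hvanish (c : Fin h → σ → K) := hmap c ▸ exists_pow_idealOfVars_le_span_iff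
    (isHomogeneous_adjoinLinearForms hG fun s ↦ algebraMap K A ∘ c s) (φ : A →+* E)
  have hφG (j : J) : (map (φ : A →+* E) (G j)).IsHomogeneous (e j) := (hG j).map _
  rw [← not_iff_not, not_lt]
  simp only [dimensionEquations, Set.mem_iUnion, not_forall, exists_prop, forall_exists_index]
  constructor
  · intro hdim
    obtain ⟨c, hc⟩ := exists_adjoinLinearForms_pow_idealOfVars_le (K := K) hφG hdim
    obtain ⟨a, ha, hne⟩ := (hvanish c).mp hc
    exact ⟨a, c, ha, hne⟩
  · rintro ⟨a, c, ha, hne⟩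
    obtain ⟨N, hN⟩ := (hvanish c).mpr ⟨a, ha, hne⟩
    exact ringKrullDim_le_of_pow_idealOfVars_le (Ideal.Quotient.mkₐ E _) hφG hN
      (Ideal.Quotient.mkₐ_surjective E _) fun j ↦
        Ideal.Quotient.eq_zero_iff_mem.mpr (Ideal.subset_span ⟨j, rfl⟩)

end Sections

/-! ### Lines -/

section LinearSubspaces

variable {ρ τ σ ι R : Type*} [CommRing R] [Fintype τ]

lemma linearSubst_linearSubst [Fintype ρ] (u : ρ → τ → R) (v : τ → σ → R)
    (f : MvPolynomial σ R) :
    linearSubst u (linearSubst v f) = linearSubst (fun s ↦ ∑ t, u s t • v t) f := by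
  have : (linearSubst u).comp (linearSubst v) = linearSubst fun s ↦ ∑ t, u s t • v t := by
    ext1 j
    simp only [AlgHom.comp_apply, linearSubst_X, map_sum, map_smul, Finset.smul_sum,
      Finset.sum_apply, Pi.smul_apply, smul_eq_mul, Finset.sum_smul, smul_smul]
    rw [Finset.sum_comm]
    simp only [mul_comm]
  exact DFunLike.congr_fun this f

lemma linearSubst_single [DecidableEq τ] (f : MvPolynomial τ R) :
    linearSubst (fun t ↦ Pi.single t (1 : R)) f = f := by
  have : linearSubst (fun t : τ ↦ Pi.single t (1 : R)) = AlgHom.id R (MvPolynomial τ R) := by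
    ext1 j
    simp [Pi.single_apply]
  exact DFunLike.congr_fun this f

lemma sum_smul_map_single [DecidableEq τ] {M : Type*} [AddCommGroup M] [Module R M]
    (g : (τ → R) →ₗ[R] M) (x : τ → R) : ∑ t, x t • g (Pi.single t 1) = g x := by
  simp only [← map_smul, ← map_sum, ← Pi.single_smul', smul_eq_mul, mul_one,
    Finset.univ_sum_single]

variable {k : Type*} [Field k] [Finite σ] {v : τ → σ → k}

lemma linearSubst_surjective (hv : LinearIndependent k v) :
    Function.Surjective (linearSubst v) := by
  classical
  have := Fintype.ofFinite σ
  obtain ⟨g, hg⟩ := (Fintype.linearCombination k v).exists_leftInverse_of_injective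
    (LinearMap.ker_eq_bot.mpr (linearIndependent_iff_injective_fintypeLinearCombination.mp hv))
  have hgv (t : τ) : g (v t) = Pi.single t 1 := by
    simpa using DFunLike.congr_fun hg (Pi.single t 1)
  refine fun f ↦ ⟨linearSubst (fun j ↦ g (Pi.single j 1)) f, ?_⟩
  simp only [linearSubst_linearSubst, sum_smul_map_single, hgv, linearSubst_single]

lemma card_le_ringKrullDim_of_linearSubst_eq_zero (hv : LinearIndependent k v)
    {F : ι → MvPolynomial σ k} (hF : ∀ i, linearSubst v (F i) = 0) :
    Fintype.card τ ≤ ringKrullDim (MvPolynomial σ k ⧸ Ideal.span (Set.range F)) := by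
  rw [← ringKrullDim_quotient_ker_linearSubst (linearSubst_surjective hv)]
  refine ringKrullDim_quotient_anti (Ideal.span_le.mpr ?_)
  rintro _ ⟨i, rfl⟩
  exact hF i

omit [Fintype τ] in
lemma VanishOnLine.two_le_ringKrullDim {F : ι → MvPolynomial σ k} (hF : VanishOnLine F) :
    2 ≤ ringKrullDim (MvPolynomial σ k ⧸ Ideal.span (Set.range F)) := by
  obtain ⟨v, hv, hvF⟩ := hF
  simpa using card_le_ringKrullDim_of_linearSubst_eq_zero hv hvF

end LinearSubspaces

section Plucker

variable {σ ι k : Type*} [Field k] [Fintype σ]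

omit [Fintype σ] in
lemma vanishOnLine_iff_eval_eq_zero [Infinite k] {F : ι → MvPolynomial σ k} :
    VanishOnLine F ↔ ∃ v w : σ → k, LinearIndependent k ![v, w] ∧
      ∀ i, ∀ s t : k, eval (s • v + t • w) (F i) = 0 := by
  have key (v : Fin 2 → σ → k) (f : MvPolynomial σ k) :
      linearSubst v f = 0 ↔ ∀ s t : k, eval (s • v 0 + t • v 1) f = 0 := by
    refine ⟨fun h s t ↦ ?_, fun h ↦ MvPolynomial.funext fun c ↦ ?_⟩
    · simpa [h] using (eval_linearSubst v ![s, t] f).symm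
    · simpa [eval_linearSubst] using h (c 0) (c 1)
  constructor
  · rintro ⟨v, hv, hF⟩
    refine ⟨v 0, v 1, ?_, fun i ↦ (key v (F i)).mp (hF i)⟩
    rwa [show ![v 0, v 1] = v from List.ofFn_inj.mp rfl]
  · rintro ⟨v, w, hvw, hF⟩
    exact ⟨![v, w], hvw, fun i ↦ (key _ (F i)).mpr (hF i)⟩

/-- The conditions on an alternating matrix `p` for the forms `F` to vanish on the span of its
columns. The line spanned by `v` and `w` corresponds to `p (j, l) = v j * w l - w j * v l`. -/
def lineSystem (K : Type*) [Field K] {R : Type*} [CommRing R] [Algebra K R]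
    (F : ι → MvPolynomial σ R) :
    (ι × (σ → K)) ⊕ (σ × σ) ⊕ σ → MvPolynomial (σ × σ) R :=
  Sum.elim
    (fun s ↦ bind₁ (fun j ↦ ∑ l, C (algebraMap K R (s.2 l)) * X (j, l)) (F s.1))
    (Sum.elim (fun s ↦ X (s.1, s.2) + X (s.2, s.1)) fun j ↦ X (j, j))

/-- The degrees of the forms in `lineSystem`. -/
def lineSystemDegree (K : Type*) (σ : Type*) (d : ι → ℕ) : (ι × (σ → K)) ⊕ (σ × σ) ⊕ σ → ℕ :=
  Sum.elim (fun s ↦ d s.1) fun _ ↦ 1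

section Naturality

variable {K R S : Type*} [Field K] [CommRing R] [Algebra K R] [CommRing S] [Algebra K S]

lemma isHomogeneous_lineSystem {F : ι → MvPolynomial σ R} {d : ι → ℕ}
    (hF : ∀ i, (F i).IsHomogeneous (d i)) (s : (ι × (σ → K)) ⊕ (σ × σ) ⊕ σ) :
    (lineSystem K F s).IsHomogeneous (lineSystemDegree K σ d s) := by
  rcases s with s | s | j
  · have := (hF s.1).aeval (fun j ↦ ∑ l, C (algebraMap K R (s.2 l)) * X (j, l)) (n := 1) fun j ↦
      IsHomogeneous.sum _ _ _ fun l _ ↦ isHomogeneous_C_mul_X _ (j, l)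
    rwa [one_mul] at this
  · exact (isHomogeneous_X _ _).add (isHomogeneous_X _ _)
  · exact isHomogeneous_X _ _

lemma map_lineSystem (φ : R →ₐ[K] S) (F : ι → MvPolynomial σ R)
    (s : (ι × (σ → K)) ⊕ (σ × σ) ⊕ σ) :
    map (φ : R →+* S) (lineSystem K F s) =
      lineSystem K (fun i ↦ map (φ : R →+* S) (F i)) s := by
  rcases s with s | s | j
  · simp [lineSystem, map_bind₁]
  · simp [lineSystem]
  · simp [lineSystem]

end Naturality

lemma eval_lineSystem_inl (F : ι → MvPolynomial σ k) (p : σ × σ → k) (i : ι) (a : σ → k) :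
    eval p (lineSystem k F (.inl (i, a))) = eval (fun j ↦ ∑ l, a l * p (j, l)) (F i) := by
  rw [lineSystem, Sum.elim_inl, ← coe_aeval_eq_eval, RingHom.coe_coe, aeval_bind₁,
    ← coe_aeval_eq_eval]
  simp

lemma exists_eval_lineSystem_eq_zero {F : ι → MvPolynomial σ k} {v w : σ → k}
    (hvw : LinearIndependent k ![v, w]) (hF : ∀ i, ∀ s t : k, eval (s • v + t • w) (F i) = 0) :
    ∃ p ≠ 0, ∀ s, eval p (lineSystem k F s) = 0 := by
  refine ⟨fun a ↦ v a.1 * w a.2 - w a.1 * v a.2, fun hp ↦ ?_, ?_⟩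
  · have hdep (l : σ) : w l • v + (-v l) • w = 0 := funext fun j ↦ by
      simpa [mul_comm, sub_eq_add_neg] using congrFun hp (j, l)
    rw [LinearIndependent.pair_iff] at hvw
    have hw : w = 0 := funext fun l ↦ (hvw _ _ (hdep l)).1
    exact one_ne_zero (hvw 0 1 (by simp [hw])).2
  · rintro (⟨i, a⟩ | s | j)
    · rw [eval_lineSystem_inl, ← hF i (∑ l, a l * w l) (-∑ l, a l * v l)]
      congr 2
      funext j
      simp only [Pi.add_apply, Pi.smul_apply, smul_eq_mul, Finset.sum_mul, neg_mul,
        ← sub_eq_add_neg, ← Finset.sum_sub_distrib]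
      exact Finset.sum_congr rfl fun l _ ↦ by ring
    · simp [lineSystem]
      ring
    · simp [lineSystem, mul_comm]

lemma exists_linearIndependent_eval_eq_zero {F : ι → MvPolynomial σ k} {p : σ × σ → k}
    (hp : p ≠ 0) (h : ∀ s, eval p (lineSystem k F s) = 0) :
    ∃ v w : σ → k, LinearIndependent k ![v, w] ∧
      ∀ i, ∀ s t : k, eval (s • v + t • w) (F i) = 0 := by
  classical
  obtain ⟨⟨j, l⟩, hjl⟩ := Function.ne_iff.mp hp
  have hanti (a b) : p (a, b) + p (b, a) = 0 := by simpa [lineSystem] using h (.inr (.inl (a, b)))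
  have hdiag (a) : p (a, a) = 0 := by simpa [lineSystem] using h (.inr (.inr a))
  refine ⟨fun a ↦ p (a, l), fun a ↦ p (a, j), LinearIndependent.pair_iff.mpr fun s t hst ↦ ?_,
    fun i s t ↦ ?_⟩
  · have hj : s * p (j, l) = 0 := by simpa [hdiag] using congrFun hst j
    have hl : t * p (l, j) = 0 := by simpa [hdiag] using congrFun hst l
    rw [eq_neg_of_add_eq_zero_right (hanti j l), mul_neg, neg_eq_zero] at hl
    exact ⟨(mul_eq_zero.mp hj).resolve_right hjl, (mul_eq_zero.mp hl).resolve_right hjl⟩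
  · have := h (.inl (i, Pi.single l s + Pi.single j t))
    rw [eval_lineSystem_inl] at this
    simpa [add_mul, Finset.sum_add_distrib, Pi.single_apply, Pi.add_def] using this

lemma vanishOnLine_iff_exists_eval_lineSystem [Infinite k] {F : ι → MvPolynomial σ k} :
    VanishOnLine F ↔ ∃ p ≠ 0, ∀ s, eval p (lineSystem k F s) = 0 :=
  vanishOnLine_iff_eval_eq_zero.trans
    ⟨fun ⟨_, _, hvw, hF⟩ ↦ exists_eval_lineSystem_eq_zero hvw hF,
      fun ⟨_, hp, h⟩ ↦ exists_linearIndependent_eval_eq_zero hp h⟩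

theorem vanishOnLine_iff_macaulayMinors [IsAlgClosed k] {A : Type*} [CommRing A] [Algebra k A]
    {F : ι → MvPolynomial σ A} {d : ι → ℕ} (hF : ∀ i, (F i).IsHomogeneous (d i)) (φ : A →ₐ[k] k) :
    VanishOnLine (fun i ↦ map (φ : A →+* k) (F i)) ↔
      ∀ a ∈ macaulayMinors (lineSystem k F) (lineSystemDegree k σ d), φ a = 0 := by
  have hI := (exists_pow_idealOfVars_le_span_iff (isHomogeneous_lineSystem (K := k) hF)
    (φ : A →+* k)).symm.trans (exists_pow_idealOfVars_le_iff _)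
  have hI' := not_congr hI
  push Not at hI'
  rw [vanishOnLine_iff_exists_eval_lineSystem]
  refine .trans (exists_congr fun p ↦ ?_) hI'.symm
  rw [and_comm, and_congr_left_iff]
  intro _
  simp only [map_lineSystem]
  refine ⟨fun h f hf ↦ ?_, fun h s ↦ h _ (Ideal.subset_span ⟨s, rfl⟩)⟩
  have hle : Ideal.span (Set.range (lineSystem k fun i ↦ map (φ : A →+* k) (F i))) ≤
      RingHom.ker (eval p) := Ideal.span_le.mpr (Set.range_subset_iff.mpr h)
  exact hle hf

end Plucker

/-! ### Parametrisation of the forms vanishing on a line -/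

section Coefficients

variable {σ ι R S : Type*} [Finite σ] [CommRing R] [CommRing S] {d : ι → ℕ}

/-- The index set of the coefficients of a family of forms of degrees `d`. -/
abbrev CoeffIndex (σ : Type*) {ι : Type*} (d : ι → ℕ) : Type _ := Σ i, DegreeExponent σ (d i)

/-- The family of forms of degrees `d` with prescribed coefficients. -/
def formOfCoeffs (x : CoeffIndex σ d → R) (i : ι) : MvPolynomial σ R :=
  ∑ m : DegreeExponent σ (d i), monomial m.1 (x ⟨i, m⟩)

lemma isHomogeneous_formOfCoeffs (x : CoeffIndex σ d → R) (i : ι) :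
    (formOfCoeffs x i).IsHomogeneous (d i) :=
  IsHomogeneous.sum _ _ _ fun m _ ↦ isHomogeneous_monomial _ m.2

lemma coeff_formOfCoeffs (x : CoeffIndex σ d → R) (a : CoeffIndex σ d) :
    coeff a.2.1 (formOfCoeffs x a.1) = x a := by
  classical
  rw [formOfCoeffs, coeff_sum, Finset.sum_eq_single a.2]
  · exact (coeff_monomial _ _ _).trans (if_pos rfl)
  · exact fun m _ hm ↦ by rw [coeff_monomial, if_neg (Subtype.coe_ne_coe.mpr hm)]
  · simp

lemma map_formOfCoeffs (φ : R →+* S) (x : CoeffIndex σ d → R) (i : ι) :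
    map φ (formOfCoeffs x i) = formOfCoeffs (φ ∘ x) i := by
  simp [formOfCoeffs]

lemma formOfCoeffs_coeff {F : ι → MvPolynomial σ R} (hF : ∀ i, (F i).IsHomogeneous (d i)) :
    formOfCoeffs (fun a : CoeffIndex σ d ↦ coeff a.2.1 (F a.1)) = F := by
  funext i
  ext m
  by_cases hm : m.degree = d i
  · exact coeff_formOfCoeffs _ (⟨i, m, hm⟩ : CoeffIndex σ d)
  · rw [(isHomogeneous_formOfCoeffs _ i).coeff_eq_zero hm, (hF i).coeff_eq_zero hm]

lemma formOfCoeffs_add (x y : CoeffIndex σ d → R) (i : ι) :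
    formOfCoeffs (x + y) i = formOfCoeffs x i + formOfCoeffs y i := by
  simp [formOfCoeffs, Finset.sum_add_distrib]

end Coefficients

section LinearAlgebra

variable {k V τ : Type*} [Field k] [AddCommGroup V] [Module k V]

lemma exists_linearEquiv_of_linearIndependent [Finite τ] {v w : τ → V}
    (hv : LinearIndependent k v) (hw : LinearIndependent k w) :
    ∃ g : V ≃ₗ[k] V, ∀ t, g (v t) = w t := by
  have : FiniteDimensional k (Submodule.span k (Set.range v)) :=
    FiniteDimensional.span_of_finite k (Set.finite_range v)
  let bv := Module.Basis.span hv
  let bw := Module.Basis.span hw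
  obtain ⟨g, hg⟩ := Submodule.exists_linearEquiv_restrict_eq (bv.equiv bw (Equiv.refl τ))
  refine ⟨g, fun t ↦ ?_⟩
  have hgt := (hg (bv t)).symm
  rwa [Module.Basis.equiv_apply, Equiv.refl_apply, Module.Basis.span_apply,
    Module.Basis.span_apply] at hgt

end LinearAlgebra

lemma isHomogeneous_linearSubst {σ τ R : Type*} [CommRing R] [Fintype τ] (v : τ → σ → R)
    {f : MvPolynomial σ R} {n : ℕ} (hf : f.IsHomogeneous n) :
    (linearSubst v f).IsHomogeneous n := by
  have := hf.aeval (fun j ↦ ∑ t, v t j • (X t : MvPolynomial τ R)) (n := 1) fun j ↦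
    IsHomogeneous.sum _ _ _ fun t _ ↦ by
      rw [smul_eq_C_mul]
      exact isHomogeneous_C_mul_X _ t
  rwa [one_mul] at this

section CoordinatePlane

variable {σ τ ι R S : Type*} [CommRing R] [CommRing S]

/-- The monomials vanishing on the coordinate subspace spanned by the variables `e t`. -/
def IsOffPlane (e : τ → σ) (m : σ →₀ ℕ) : Prop := ∃ j ∉ Set.range e, m j ≠ 0

lemma map_linearSubst [Fintype τ] (φ : R →+* S) (v : τ → σ → R) (f : MvPolynomial σ R) :
    map φ (linearSubst v f) = linearSubst (fun t j ↦ φ (v t j)) (map φ f) := by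
  have : (map φ).comp (linearSubst v : MvPolynomial σ R →+* MvPolynomial τ R) =
      (linearSubst fun t j ↦ φ (v t j) : MvPolynomial σ S →+* MvPolynomial τ S).comp (map φ) := by
    refine MvPolynomial.ringHom_ext (fun a ↦ ?_) fun j ↦ ?_
    · simp [linearSubst]
    · simp [smul_eq_C_mul]
  exact DFunLike.congr_fun this f

variable [DecidableEq σ] {e : τ → σ}

lemma isEchelon_single [DecidableEq τ] (he : Function.Injective e) :
    IsEchelon e fun t ↦ (Pi.single (e t) 1 : σ → R) := fun s t ↦ by
  simp [Pi.single_apply, he.eq_iff]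

variable [Fintype τ]

lemma ker_linearSubst_single (he : Function.Injective e) :
    RingHom.ker (linearSubst fun t ↦ (Pi.single (e t) 1 : σ → R)) =
      Ideal.span (X '' (Set.range e)ᶜ) := by
  classical
  have hoff {j : σ} (hj : j ∉ Set.range e) :
      X j - ∑ t, (Pi.single (e t) 1 : σ → R) j • (X (e t) : MvPolynomial σ R) = X j :=
    sub_eq_self.mpr <| Finset.sum_eq_zero fun t _ ↦ by
      rw [Pi.single_eq_of_ne fun h ↦ hj ⟨t, h.symm⟩, zero_smul]
  rw [(isEchelon_single he).ker_linearSubst]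
  refine le_antisymm (Ideal.span_le.mpr ?_) (Ideal.span_mono ?_)
  · rintro _ ⟨j, rfl⟩
    by_cases hj : j ∈ Set.range e
    · obtain ⟨t, rfl⟩ := hj
      simp [Pi.single_apply, he.eq_iff]
    · exact Ideal.subset_span ⟨j, hj, (hoff hj).symm⟩
  · rintro _ ⟨j, hj, rfl⟩
    exact ⟨j, hoff hj⟩

lemma linearSubst_single_eq_zero_iff (he : Function.Injective e) {f : MvPolynomial σ R} :
    linearSubst (fun t ↦ Pi.single (e t) 1) f = 0 ↔ ∀ m ∈ f.support, IsOffPlane e m := by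
  rw [← RingHom.mem_ker, ker_linearSubst_single he, mem_ideal_span_X_image]
  rfl

end CoordinatePlane

section OffPlane

variable {σ τ ι R S : Type*} [CommRing R] [CommRing S] {d : ι → ℕ}

open Classical in
/-- The truncation of a family of coefficients to the monomials off the coordinate subspace `e`. -/
def offPlaneCoeffs (e : τ → σ) (x : CoeffIndex σ d → R) : CoeffIndex σ d → R :=
  fun a ↦ if IsOffPlane e a.2.1 then x a else 0

lemma comp_offPlaneCoeffs (φ : R →+* S) (e : τ → σ) (x : CoeffIndex σ d → R) :
    φ ∘ offPlaneCoeffs e x = offPlaneCoeffs e (φ ∘ x) := by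
  funext a
  simp [offPlaneCoeffs, apply_ite φ]

lemma offPlaneCoeffs_add (e : τ → σ) (x y : CoeffIndex σ d → R) :
    offPlaneCoeffs e (x + y) = offPlaneCoeffs e x + offPlaneCoeffs e y := by
  funext a
  simp only [offPlaneCoeffs, Pi.add_apply]
  split_ifs
  exacts [rfl, (add_zero 0).symm]

lemma linearSubst_single_formOfCoeffs_offPlaneCoeffs [Finite σ] [Fintype τ] [DecidableEq σ]
    {e : τ → σ} (he : Function.Injective e) (x : CoeffIndex σ d → R) (i : ι) :
    linearSubst (fun t ↦ Pi.single (e t) 1) (formOfCoeffs (offPlaneCoeffs e x) i) = 0 := by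
  refine (linearSubst_single_eq_zero_iff he).mpr fun m hm ↦ ?_
  rw [mem_support_iff] at hm
  have hdeg : m.degree = d i := by
    by_contra h
    exact hm ((isHomogeneous_formOfCoeffs _ i).coeff_eq_zero h)
  rw [coeff_formOfCoeffs _ (⟨i, m, hdeg⟩ : CoeffIndex σ d)] at hm
  exact of_not_not fun h ↦ hm (if_neg h)

lemma formOfCoeffs_offPlaneCoeffs_coeff [Finite σ] [Fintype τ] [DecidableEq σ] {e : τ → σ}
    (he : Function.Injective e) {G : ι → MvPolynomial σ R} (hG : ∀ i, (G i).IsHomogeneous (d i))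
    (hG' : ∀ i, linearSubst (fun t ↦ Pi.single (e t) 1) (G i) = 0) :
    formOfCoeffs (offPlaneCoeffs e fun b : CoeffIndex σ d ↦ coeff b.2.1 (G b.1)) = G := by
  conv_rhs => rw [← formOfCoeffs_coeff hG]
  congr 1
  funext b
  by_cases hb : IsOffPlane e b.2.1
  · exact if_pos hb
  · refine (if_neg hb).trans (notMem_support_iff.mp fun hmem ↦ hb ?_).symm
    exact (linearSubst_single_eq_zero_iff he).mp (hG' b.1) _ hmem

end OffPlane

section Parametrization

variable {σ τ ι R S : Type*} [Fintype σ] [CommRing R] [CommRing S] {d : ι → ℕ}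

/-- The coefficients of the forms obtained by the linear substitution `y ∘ Sum.inl` from the forms
that have the coefficients `y ∘ Sum.inr` at the monomials off the coordinate subspace `e`, and no
other monomials. -/
def subspaceCoeffs (e : τ → σ) (y : (σ × σ) ⊕ CoeffIndex σ d → R) : CoeffIndex σ d → R :=
  fun a ↦ coeff a.2.1 <| linearSubst (fun i j ↦ y (.inl (i, j))) <|
    formOfCoeffs (offPlaneCoeffs e (y ∘ Sum.inr)) a.1

lemma comp_subspaceCoeffs (φ : R →+* S) (e : τ → σ) (y : (σ × σ) ⊕ CoeffIndex σ d → R) :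
    φ ∘ subspaceCoeffs e y = subspaceCoeffs e (φ ∘ y) := by
  funext a
  simp only [subspaceCoeffs, Function.comp_apply, ← coeff_map, map_linearSubst, map_formOfCoeffs,
    comp_offPlaneCoeffs, Function.comp_assoc]

lemma formOfCoeffs_subspaceCoeffs (e : τ → σ) (y : (σ × σ) ⊕ CoeffIndex σ d → R) (i : ι) :
    formOfCoeffs (subspaceCoeffs e y) i = linearSubst (fun i j ↦ y (.inl (i, j)))
      (formOfCoeffs (offPlaneCoeffs e (y ∘ Sum.inr)) i) :=
  congrFun (formOfCoeffs_coeff fun i ↦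
    isHomogeneous_linearSubst _ (isHomogeneous_formOfCoeffs _ i)) i

variable {k : Type*} [Field k] {e : τ → σ}

lemma exists_subspaceCoeffs_eq [Fintype τ] (he : Function.Injective e)
    {F : ι → MvPolynomial σ k} (hF : ∀ i, (F i).IsHomogeneous (d i)) {v : τ → σ → k}
    (hv : LinearIndependent k v) (hvF : ∀ i, linearSubst v (F i) = 0) :
    ∃ y, formOfCoeffs (subspaceCoeffs (d := d) e y) = F := by
  classical
  have he' : LinearIndependent k fun t ↦ (Pi.single (e t) 1 : σ → k) :=
    (Pi.linearIndependent_single_one σ k).comp e he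
  obtain ⟨g, hg⟩ := exists_linearEquiv_of_linearIndependent he' hv
  let G (i : ι) := linearSubst (fun j ↦ g (Pi.single j 1)) (F i)
  have hGhom (i : ι) : (G i).IsHomogeneous (d i) := isHomogeneous_linearSubst _ (hF i)
  have hG (i : ι) : linearSubst (fun t ↦ Pi.single (e t) 1) (G i) = 0 := by
    have hgv (t : τ) : ∑ j, (Pi.single (e t) 1 : σ → k) j • g (Pi.single j 1) = v t :=
      (sum_smul_map_single g.toLinearMap _).trans (hg t)
    simp only [G, linearSubst_linearSubst, hgv, hvF]
  have hGF (i : ι) : linearSubst (fun j ↦ g.symm (Pi.single j 1)) (G i) = F i := by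
    have hgg (s : σ) : ∑ t, g.symm (Pi.single s 1) t • g (Pi.single t 1) = Pi.single s 1 :=
      (sum_smul_map_single g.toLinearMap _).trans (g.apply_symm_apply _)
    simp only [G, linearSubst_linearSubst, hgg, linearSubst_single]
  refine ⟨Sum.elim (fun p ↦ g.symm (Pi.single p.1 1) p.2) fun b ↦ coeff b.2.1 (G b.1),
    funext fun i ↦ ?_⟩
  rw [formOfCoeffs_subspaceCoeffs, Sum.elim_comp_inr, formOfCoeffs_offPlaneCoeffs_coeff he hGhom hG]
  exact hGF i

lemma exists_linearIndependent_forall_notMem_range_eq_zero {σ τ : Type*} [Finite σ] [Finite τ]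
    {e : τ → σ} (he : Function.Injective e) (T : (σ → k) →ₗ[k] (σ → k)) :
    ∃ u : τ → σ → k, LinearIndependent k u ∧ ∀ s, ∀ j ∉ Set.range e, T (u s) j = 0 := by
  classical
  have := Fintype.ofFinite σ
  have := Fintype.ofFinite τ
  let T' : (σ → k) →ₗ[k] ({j // j ∉ Set.range e} → k) := LinearMap.funLeft k k Subtype.val ∘ₗ T
  have hT : Fintype.card τ ≤ Module.finrank k (LinearMap.ker T') := by
    have hrank := T'.finrank_range_add_finrank_ker
    have hle := Submodule.finrank_le (LinearMap.range T')
    have hcard := Fintype.card_subtype_compl (· ∈ Set.range e)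
    have hrange : Fintype.card {j // j ∈ Set.range e} = Fintype.card τ :=
      Set.card_range_of_injective he
    have hσ := Fintype.card_le_of_injective e he
    simp only [Module.finrank_fintype_fun_eq_card] at hrank hle
    omega
  obtain ⟨u, hu⟩ := exists_linearIndependent_of_le_finrank hT
  refine ⟨fun s ↦ u (Fintype.equivFin τ s), ?_,
    fun s j hj ↦ congrFun (u (Fintype.equivFin τ s)).2 ⟨j, hj⟩⟩
  exact (hu.map' (LinearMap.ker T').subtype (Submodule.ker_subtype _)).comp _
    (Fintype.equivFin τ).injective

omit [Fintype σ] in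
lemma eq_sum_single_of_forall_notMem_range [Fintype τ] [DecidableEq σ]
    (he : Function.Injective e) {x : σ → k} (hx : ∀ j ∉ Set.range e, x j = 0) :
    x = ∑ t, x (e t) • (Pi.single (e t) 1 : σ → k) := by
  classical
  funext j
  rw [Finset.sum_apply]
  by_cases hj : j ∈ Set.range e
  · obtain ⟨t, rfl⟩ := hj
    rw [Finset.sum_eq_single t _ (by simp)]
    · simp
    · exact fun s _ hst ↦ by simp [he.eq_iff, hst.symm]
  · rw [hx j hj, Finset.sum_eq_zero fun t _ ↦ ?_]
    simp [Pi.single_eq_of_ne fun h ↦ hj ⟨t, h.symm⟩]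

lemma exists_linearSubst_linearSubst_eq_zero [Fintype τ] [DecidableEq σ]
    (he : Function.Injective e) (M : σ → σ → k) {H : ι → MvPolynomial σ k}
    (hH : ∀ i, linearSubst (fun t ↦ Pi.single (e t) 1) (H i) = 0) :
    ∃ u : τ → σ → k, LinearIndependent k u ∧ ∀ i, linearSubst u (linearSubst M (H i)) = 0 := by
  obtain ⟨u, hu, huM⟩ := exists_linearIndependent_forall_notMem_range_eq_zero he
    (Fintype.linearCombination k M)
  refine ⟨u, hu, fun i ↦ ?_⟩
  have hspan (s : τ) : ∑ t, u s t • M t =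
      ∑ t, (∑ t', u s t' • M t') (e t) • (Pi.single (e t) 1 : σ → k) :=
    eq_sum_single_of_forall_notMem_range he (huM s)
  rw [linearSubst_linearSubst, funext hspan, ← linearSubst_linearSubst, hH, map_zero]

theorem vanishOnLine_formOfCoeffs_iff {e : Fin 2 → σ} (he : Function.Injective e)
    {x : CoeffIndex σ d → k} :
    VanishOnLine (formOfCoeffs x) ↔ ∃ y, subspaceCoeffs e y = x := by
  classical
  constructor
  · rintro ⟨v, hv, hvx⟩
    obtain ⟨y, hy⟩ := exists_subspaceCoeffs_eq he (isHomogeneous_formOfCoeffs x) hv hvx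
    refine ⟨y, funext fun a ↦ ?_⟩
    rw [← coeff_formOfCoeffs (subspaceCoeffs e y), hy, coeff_formOfCoeffs]
  · rintro ⟨y, rfl⟩
    rw [funext (formOfCoeffs_subspaceCoeffs e y)]
    exact exists_linearSubst_linearSubst_eq_zero he _
      (linearSubst_single_formOfCoeffs_offPlaneCoeffs he _)

end Parametrization

/-! ### The dimension of the locus of forms vanishing on a line -/

lemma aeval_sub_self_mem {τ R : Type*} [CommRing R] {z : τ → MvPolynomial τ R}
    {I : Ideal (MvPolynomial τ R)} (hz : ∀ v, z v - X v ∈ I) (f : MvPolynomial τ R) :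
    aeval z f - f ∈ I := by
  have : (Ideal.Quotient.mkₐ R I).comp (aeval z) = Ideal.Quotient.mkₐ R I := by
    ext1 v
    exact Ideal.Quotient.eq.mpr (by simpa using hz v)
  exact Ideal.Quotient.eq.mp (DFunLike.congr_fun this f)

section Perturbation

variable {σ R : Type*} [CommRing R] [Fintype σ] [DecidableEq σ] {J : Ideal R} {N : σ → σ → R}

lemma linearSubst_sub_self_mem (hN : ∀ i j, N i j - (Pi.single i 1 : σ → R) j ∈ J)
    (f : MvPolynomial σ R) : linearSubst N f - f ∈ J.map C := by
  refine aeval_sub_self_mem (fun j ↦ ?_) f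
  have hsum : linearSubst N (X j) - X j = ∑ i, C (N i j - (Pi.single i 1 : σ → R) j) * X i := by
    simp only [map_sub, sub_mul, Finset.sum_sub_distrib, linearSubst_X, smul_eq_C_mul]
    congr 1
    simp [Pi.single_apply]
  rw [← linearSubst_X, hsum]
  exact Ideal.sum_mem _ fun i _ ↦ Ideal.mul_mem_right _ _ (Ideal.mem_map_of_mem C (hN i j))

lemma linearSubst_sub_self_mem_sq (hN : ∀ i j, N i j - (Pi.single i 1 : σ → R) j ∈ J)
    {f : MvPolynomial σ R} (hf : f ∈ J.map C) : linearSubst N f - f ∈ (J ^ 2).map C := by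
  have hmul {g h : MvPolynomial σ R} (hg : g ∈ J.map C) (hh : h ∈ J.map C) :
      g * h ∈ (J ^ 2).map C := by
    rw [Ideal.map_pow, sq]
    exact Ideal.mul_mem_mul hg hh
  induction hf using Submodule.span_induction with
  | mem f hf =>
    obtain ⟨a, -, rfl⟩ := hf
    simp [linearSubst]
  | zero => simp
  | add f g _ _ ihf ihg =>
    rw [map_add, add_sub_add_comm]
    exact add_mem ihf ihg
  | smul g f hf ih =>
    have : linearSubst N (g • f) - g • f =
        linearSubst N g * (linearSubst N f - f) + (linearSubst N g - g) * f := by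
      simp only [smul_eq_mul, map_mul]
      ring
    rw [this]
    exact add_mem (Ideal.mul_mem_left _ _ ih) (hmul (linearSubst_sub_self_mem hN g) hf)

end Perturbation

section AlgebraicIndependence

variable {V K : Type*} [Field K]

lemma aeval_sub_self_mem_pow_succ {R : Type*} [CommRing R] {z : V → MvPolynomial V R}
    (hz : ∀ v, z v - X v ∈ idealOfVars V R ^ 2) {n : ℕ} {f : MvPolynomial V R}
    (hf : f ∈ idealOfVars V R ^ n) : aeval z f - f ∈ idealOfVars V R ^ (n + 1) := by
  induction n generalizing f with
  | zero =>
    rw [zero_add, pow_one]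
    exact Ideal.pow_le_self two_ne_zero (aeval_sub_self_mem hz f)
  | succ n ih =>
    rw [pow_succ] at hf
    induction hf using Submodule.mul_induction_on' with
    | mem_mul_mem g hg h hh =>
      have hg' : aeval z g ∈ idealOfVars V R ^ n :=
        (Submodule.sub_mem_iff_left _ hg).mp (Ideal.pow_le_pow_right n.le_succ (ih hg))
      have hmul : aeval z (g * h) - g * h =
          aeval z g * (aeval z h - h) + (aeval z g - g) * h := by
        rw [map_mul]
        ring
      rw [hmul]
      refine add_mem ?_ ?_
      · rw [add_assoc, pow_add]
        exact Ideal.mul_mem_mul hg' (aeval_sub_self_mem hz h)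
      · rw [pow_succ]
        exact Ideal.mul_mem_mul (ih hg) hh
    | add g _ h _ ihg ihh =>
      rw [map_add, add_sub_add_comm]
      exact add_mem ihg ihh

/-- A formal inverse function theorem. -/
theorem algebraicIndependent_of_sub_X_mem [Finite V] {z : V → MvPolynomial V K}
    (hz : ∀ v, z v - X v ∈ idealOfVars V K ^ 2) : AlgebraicIndependent K z := by
  have hne : idealOfVars V K ≠ ⊤ := (isMaximal_idealOfVars ..).ne_top
  refine (injective_iff_map_eq_zero _).mpr fun f hf ↦ ?_
  have hpow (n : ℕ) : f ∈ idealOfVars V K ^ n := by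
    induction n with
    | zero => simp
    | succ n ih =>
      have h := aeval_sub_self_mem_pow_succ hz ih
      rwa [show aeval z f = 0 from hf, zero_sub, neg_mem_iff] at h
  rw [← Ideal.mem_bot, ← Ideal.iInf_pow_eq_bot_of_isDomain _ hne]
  exact Ideal.mem_iInf.mpr hpow

end AlgebraicIndependence

section Shear

variable {σ τ R : Type*} [CommRing R] [Fintype τ] [DecidableEq σ] {e : τ → σ}
  (w : {j // j ∉ Set.range e} → τ → R)

open Classical in
/-- The matrix of the substitution replacing each variable `j` off the range of `e` by
`X j + ∑ t, w j t • X (e t)`. -/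
def shear (i j : σ) : R :=
  (Pi.single i 1 : σ → R) j +
    if hj : j ∈ Set.range e then 0 else ∑ t, (Pi.single (e t) (w ⟨j, hj⟩ t) : σ → R) i

lemma shear_sub_single_mem {J : Ideal R} (hw : ∀ k t, w k t ∈ J) (i j : σ) :
    shear w i j - (Pi.single i 1 : σ → R) j ∈ J := by
  rw [shear, add_sub_cancel_left]
  split_ifs with hj
  · exact J.zero_mem
  · refine J.sum_mem fun t _ ↦ ?_
    rw [Pi.single_apply]
    split_ifs
    exacts [hw _ _, J.zero_mem]

variable [Fintype σ]

lemma linearSubst_shear_X_apply (t : τ) : linearSubst (shear w) (X (e t)) = X (e t) := by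
  have h (i : σ) : shear w i (e t) = (Pi.single i 1 : σ → R) (e t) := by simp [shear]
  simp only [linearSubst_X, h]
  simp [Pi.single_apply]

lemma linearSubst_shear_X (k : {j // j ∉ Set.range e}) :
    linearSubst (shear w) (X k) = X k.1 + ∑ t, w k t • X (e t) := by
  have h (i : σ) : shear w i k =
      (Pi.single i 1 : σ → R) k + ∑ t, (Pi.single (e t) (w k t) : σ → R) i := by
    rw [shear, dif_neg k.2]
  simp only [linearSubst_X, h, add_smul, Finset.sum_add_distrib, Finset.sum_smul]
  rw [Finset.sum_comm]
  simp [Pi.single_apply]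

end Shear

section Ideal

variable {σ τ ι : Type*} [Fintype σ] {K S : Type*} [Field K] [CommRing S] [Algebra K S] {d : ι → ℕ}

variable (K d) in
/-- The ideal of the locus of families of forms of degrees `d` parametrised by `subspaceCoeffs e`,
the families vanishing on some linear subspace of the dimension of `e`. -/
def subspaceIdeal (e : τ → σ) : Ideal (MvPolynomial (CoeffIndex σ d) K) :=
  RingHom.ker (aeval (subspaceCoeffs (d := d) e (X (R := K))))

instance (e : τ → σ) : (subspaceIdeal K d e).IsPrime :=
  RingHom.ker_isPrime _

lemma aeval_aeval_subspaceCoeffs (e : τ → σ) (y : (σ × σ) ⊕ CoeffIndex σ d → S)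
    (f : MvPolynomial (CoeffIndex σ d) K) :
    aeval y (aeval (subspaceCoeffs e (X (R := K))) f) = aeval (subspaceCoeffs e y) f := by
  let φ : MvPolynomial ((σ × σ) ⊕ CoeffIndex σ d) K →ₐ[K] S := aeval y
  have hφ : φ ∘ X = y := _root_.funext (aeval_X y)
  have h : φ ∘ subspaceCoeffs e X = subspaceCoeffs e (φ ∘ X) := comp_subspaceCoeffs φ.toRingHom e X
  rw [hφ] at h
  rw [← h, ← AlgHom.comp_apply, comp_aeval]
  rfl

lemma aeval_eq_zero_of_mem_subspaceIdeal {e : τ → σ} {f : MvPolynomial (CoeffIndex σ d) K}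
    (hf : f ∈ subspaceIdeal K d e) (y : (σ × σ) ⊕ CoeffIndex σ d → S) :
    aeval (subspaceCoeffs e y) f = 0 := by
  rw [← aeval_aeval_subspaceCoeffs, RingHom.mem_ker.mp hf, map_zero]

lemma mem_subspaceIdeal_iff [Infinite K] {e : τ → σ} {f : MvPolynomial (CoeffIndex σ d) K} :
    f ∈ subspaceIdeal K d e ↔
      ∀ y : (σ × σ) ⊕ CoeffIndex σ d → K, aeval (subspaceCoeffs e y) f = 0 := by
  refine ⟨aeval_eq_zero_of_mem_subspaceIdeal, fun h ↦ MvPolynomial.funext fun y ↦ ?_⟩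
  rw [map_zero, ← coe_aeval_eq_eval]
  exact (aeval_aeval_subspaceCoeffs e y f).trans (h y)

end Ideal

section LowerBound

variable {σ τ ι R : Type*} [Fintype σ] [CommRing R] {d : ι → ℕ}

lemma subspaceCoeffs_sub_mem_sq [DecidableEq σ] {J : Ideal R} (e : τ → σ) {N : σ → σ → R}
    (hN : ∀ i j, N i j - (Pi.single i 1 : σ → R) j ∈ J) (x : CoeffIndex σ d → R)
    {u : CoeffIndex σ d → R} (hu : ∀ a, u a ∈ J) (a : CoeffIndex σ d) :
    subspaceCoeffs e (Sum.elim (fun p ↦ N p.1 p.2) (x + u)) a -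
      (coeff a.2.1 (linearSubst N (formOfCoeffs (offPlaneCoeffs e x) a.1)) +
        offPlaneCoeffs e u a) ∈ J ^ 2 := by
  have hmem : formOfCoeffs (offPlaneCoeffs e u) a.1 ∈ J.map C := by
    refine Ideal.sum_mem _ fun m _ ↦ ?_
    rw [← mul_one (offPlaneCoeffs e u _), ← C_mul_monomial]
    refine Ideal.mul_mem_right _ _ (Ideal.mem_map_of_mem C ?_)
    rw [offPlaneCoeffs]
    split_ifs
    exacts [hu _, J.zero_mem]
  have h := mem_map_C_iff.mp (linearSubst_sub_self_mem_sq hN hmem) a.2.1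
  rw [coeff_sub, coeff_formOfCoeffs] at h
  convert h using 1
  simp only [subspaceCoeffs, Sum.elim_inl, Sum.elim_comp_inr, offPlaneCoeffs_add, formOfCoeffs_add,
    map_add, coeff_add]
  ring

variable [Fintype τ] [DecidableEq σ] {e : τ → σ}

/-- The exponent of `X i ^ (n - 1) * X j`. -/
def tangentExponent (i : σ) (n : ℕ) (j : σ) : σ →₀ ℕ :=
  Finsupp.single i (n - 1) + Finsupp.single j 1

omit [Fintype σ] [DecidableEq σ] in
lemma degree_tangentExponent (i : σ) {n : ℕ} (hn : 1 ≤ n) (j : σ) :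
    (tangentExponent i n j).degree = n := by
  rw [tangentExponent, map_add, Finsupp.degree_single, Finsupp.degree_single]
  omega

omit [Fintype σ] [DecidableEq σ] in
lemma tangentExponent_injective (i : σ) (n : ℕ) : Function.Injective (tangentExponent i n) :=
  fun _ _ h ↦ Finsupp.single_left_injective one_ne_zero (add_left_cancel h)

omit [Fintype σ] [DecidableEq σ] [Fintype τ] in
lemma isOffPlane_tangentExponent (t₀ : τ) (n : ℕ) {j : σ} :
    IsOffPlane e (tangentExponent (e t₀) n j) ↔ j ∉ Set.range e := by
  classical
  constructor
  · rintro ⟨l, hl, hne⟩ hj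
    refine hne ?_
    rw [tangentExponent, Finsupp.add_apply, Finsupp.single_eq_of_ne (fun h ↦ hl ⟨t₀, h.symm⟩),
      Finsupp.single_eq_of_ne (ne_of_mem_of_not_mem hj hl).symm, add_zero]
  · exact fun hj ↦ ⟨j, hj, by simp [tangentExponent]⟩

omit [Fintype σ] [Fintype τ] [DecidableEq σ] in
lemma monomial_tangentExponent (i : σ) (n : ℕ) (j : σ) (c : R) :
    monomial (tangentExponent i n j) c = c • (X i ^ (n - 1) * X j) := by
  rw [X_pow_eq_monomial, X, monomial_mul, smul_monomial, smul_eq_mul, mul_one, mul_one]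
  rfl

lemma linearSubst_shear_tangentExponent (w : {j // j ∉ Set.range e} → τ → R) (t₀ : τ) (n : ℕ)
    (k : {j // j ∉ Set.range e}) :
    linearSubst (shear w) (monomial (tangentExponent (e t₀) n k) 1) =
      monomial (tangentExponent (e t₀) n k) 1 +
        ∑ t, monomial (tangentExponent (e t₀) n (e t)) (w k t) := by
  simp only [monomial_tangentExponent, one_smul, map_mul, map_pow, linearSubst_shear_X_apply,
    linearSubst_shear_X, mul_add, Finset.mul_sum, mul_smul_comm]

/-- The family of the forms `X (e t₀) ^ (d i - 1) * X k` for `i = s k`, completed by zeros. The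
coordinate subspace `e` is an isolated point among the linear subspaces on which it vanishes. -/
def baseForm (R : Type*) [CommRing R] (d : ι → ℕ) (t₀ : τ) (s : {j // j ∉ Set.range e} → ι) :
    ι → MvPolynomial σ R :=
  Function.extend s (fun k ↦ monomial (tangentExponent (e t₀) (d (s k)) k) 1) 0

variable {t₀ : τ} {s : {j // j ∉ Set.range e} → ι}

omit [Fintype σ] [Fintype τ] [DecidableEq σ] in
lemma isHomogeneous_baseForm (hs : Function.Injective s) (hd : ∀ k, 1 ≤ d (s k)) (i : ι) :
    (baseForm R d t₀ s i).IsHomogeneous (d i) := by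
  by_cases hi : ∃ k, s k = i
  · obtain ⟨k, rfl⟩ := hi
    rw [baseForm, hs.extend_apply]
    exact isHomogeneous_monomial _ (degree_tangentExponent _ (hd k) _)
  · rw [baseForm, Function.extend_apply' _ _ _ hi]
    exact isHomogeneous_zero ..

omit [Fintype σ] in
lemma linearSubst_single_baseForm (he : Function.Injective e) (hs : Function.Injective s) (i : ι) :
    linearSubst (fun t ↦ Pi.single (e t) 1) (baseForm R d t₀ s i) = 0 := by
  refine (linearSubst_single_eq_zero_iff he).mpr fun m hm ↦ ?_
  by_cases hi : ∃ k, s k = i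
  · obtain ⟨k, rfl⟩ := hi
    rw [baseForm, hs.extend_apply] at hm
    rw [Finset.mem_singleton.mp (support_monomial_subset hm)]
    exact (isOffPlane_tangentExponent ..).mpr k.2
  · simp [baseForm, Function.extend_apply' _ _ _ hi] at hm

variable (w : {j // j ∉ Set.range e} → τ → R)

lemma coeff_linearSubst_shear_baseForm (hs : Function.Injective s) {i : ι} {m : σ →₀ ℕ}
    (hm : IsOffPlane e m) :
    coeff m (linearSubst (shear w) (baseForm R d t₀ s i)) = coeff m (baseForm R d t₀ s i) := by
  classical
  by_cases hi : ∃ k, s k = i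
  · obtain ⟨k, rfl⟩ := hi
    rw [baseForm, hs.extend_apply, linearSubst_shear_tangentExponent, coeff_add, coeff_sum,
      Finset.sum_eq_zero, add_zero]
    intro t _
    rw [coeff_monomial, if_neg]
    rintro rfl
    exact (isOffPlane_tangentExponent ..).mp hm ⟨t, rfl⟩
  · rw [baseForm, Function.extend_apply' _ _ _ hi, Pi.zero_apply, map_zero]

lemma coeff_linearSubst_shear_baseForm_apply (he : Function.Injective e)
    (hs : Function.Injective s) (k : {j // j ∉ Set.range e}) (t : τ) :
    coeff (tangentExponent (e t₀) (d (s k)) (e t))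
      (linearSubst (shear w) (baseForm R d t₀ s (s k))) = w k t := by
  classical
  have hinj := tangentExponent_injective (e t₀) (d (s k))
  rw [baseForm, hs.extend_apply, linearSubst_shear_tangentExponent, coeff_add, coeff_sum,
    coeff_monomial, if_neg fun h ↦ k.2 ⟨t, (hinj h).symm⟩, zero_add, Finset.sum_eq_single t]
  · rw [coeff_monomial, if_pos rfl]
  · exact fun t' _ ht ↦ by rw [coeff_monomial, if_neg fun h ↦ ht (he (hinj h))]
  · simp

omit [Fintype σ] [Fintype τ] [DecidableEq σ] in
lemma map_baseForm {S : Type*} [CommRing S] (φ : R →+* S) (hs : Function.Injective s) (i : ι) :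
    map φ (baseForm R d t₀ s i) = baseForm S d t₀ s i := by
  by_cases hi : ∃ k, s k = i
  · obtain ⟨k, rfl⟩ := hi
    simp only [baseForm, hs.extend_apply, map_monomial, map_one]
  · simp only [baseForm, Function.extend_apply' _ _ _ hi, Pi.zero_apply, map_zero]

/-- The parameters of a deformation of `baseForm` and of the subspace on which it vanishes. -/
abbrev DeformationIndex (e : τ → σ) (d : ι → ℕ) : Type _ :=
  {a : CoeffIndex σ d // IsOffPlane e a.2.1} ⊕ ({j // j ∉ Set.range e} × τ)

omit [DecidableEq σ] [Fintype τ] in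
theorem exists_aeval_subspaceCoeffs_sub_X_mem (K : Type*) [Field K] (he : Function.Injective e)
    (t₀ : τ) (hs : Function.Injective s) (hd : ∀ k, 1 ≤ d (s k)) :
    ∃ (y : (σ × σ) ⊕ CoeffIndex σ d → MvPolynomial (DeformationIndex e d) K)
      (z : DeformationIndex e d → MvPolynomial (CoeffIndex σ d) K),
      ∀ v, aeval (subspaceCoeffs e y) (z v) - X v ∈ idealOfVars (DeformationIndex e d) K ^ 2 := by
  classical
  have := Finite.of_injective e he
  have := Fintype.ofFinite τ
  let B := MvPolynomial (DeformationIndex e d) K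
  let w (k : {j // j ∉ Set.range e}) (t : τ) : B := X (.inr (k, t))
  let x (a : CoeffIndex σ d) : B := coeff a.2.1 (baseForm B d t₀ s a.1)
  let u (a : CoeffIndex σ d) : B := if h : IsOffPlane e a.2.1 then X (.inl ⟨a, h⟩) else 0
  let m (k : {j // j ∉ Set.range e}) (t : τ) : CoeffIndex σ d :=
    ⟨s k, tangentExponent (e t₀) (d (s k)) (e t), degree_tangentExponent _ (hd k) _⟩
  have hX (v : DeformationIndex e d) : (X v : B) ∈ idealOfVars (DeformationIndex e d) K :=
    Ideal.subset_span ⟨v, rfl⟩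
  have hu (a : CoeffIndex σ d) : u a ∈ idealOfVars (DeformationIndex e d) K := by
    simp only [u]
    split_ifs
    exacts [hX _, zero_mem _]
  have hx : formOfCoeffs (offPlaneCoeffs e x) = baseForm B d t₀ s :=
    formOfCoeffs_offPlaneCoeffs_coeff he (isHomogeneous_baseForm hs hd)
      (linearSubst_single_baseForm he hs)
  have key (a : CoeffIndex σ d) := subspaceCoeffs_sub_mem_sq e
    (shear_sub_single_mem w fun k t ↦ hX (.inr (k, t))) x hu a
  simp only [hx] at key
  refine ⟨Sum.elim (fun p ↦ shear w p.1 p.2) (x + u),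
    Sum.elim (fun a ↦ X a.1 - C (coeff a.1.2.1 (baseForm K d t₀ s a.1.1)))
      fun p ↦ X (m p.1 p.2), ?_⟩
  rintro (⟨a, ha⟩ | ⟨k, t⟩)
  · have h := key a
    rw [coeff_linearSubst_shear_baseForm w hs ha, offPlaneCoeffs, if_pos ha, ← sub_sub,
      ← map_baseForm (algebraMap K B) hs, coeff_map] at h
    simpa only [Sum.elim_inl, map_sub, aeval_X, algHom_C, u, dif_pos ha] using h
  · have hm : ¬ IsOffPlane e (m k t).2.1 := fun h ↦
      (isOffPlane_tangentExponent ..).mp h ⟨t, rfl⟩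
    have h := key (m k t)
    rw [offPlaneCoeffs, if_neg hm, add_zero, coeff_linearSubst_shear_baseForm_apply w he hs] at h
    simpa only [Sum.elim_inr, aeval_X] using h

omit [DecidableEq σ] in
theorem card_add_card_mul_card_le_ringKrullDim {K : Type*} [Field K] [Finite ι]
    (he : Function.Injective e) (t₀ : τ) (hs : Function.Injective s) (hd : ∀ k, 1 ≤ d (s k)) :
    ((Nat.card {a : CoeffIndex σ d // IsOffPlane e a.2.1} +
      (Fintype.card σ - Fintype.card τ) * Fintype.card τ : ℕ) : WithBot ℕ∞) ≤
      ringKrullDim (MvPolynomial (CoeffIndex σ d) K ⧸ subspaceIdeal K d e) := by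
  classical
  obtain ⟨y, z, hz⟩ := exists_aeval_subspaceCoeffs_sub_X_mem K he t₀ hs hd
  have hcard : Nat.card {a : CoeffIndex σ d // IsOffPlane e a.2.1} +
      (Fintype.card σ - Fintype.card τ) * Fintype.card τ = Nat.card (DeformationIndex e d) := by
    have := Fintype.ofFinite ι
    have h := Fintype.card_subtype_compl (· ∈ Set.range e)
    have hrange : Fintype.card {j // j ∈ Set.range e} = Fintype.card τ :=
      Set.card_range_of_injective he
    rw [hrange] at h
    rw [Nat.card_sum, Nat.card_prod, Nat.card_eq_fintype_card (α := τ), ← h,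
      Nat.card_eq_fintype_card (α := {j // j ∉ Set.range e})]
  have hind : AlgebraicIndependent K fun v ↦ aeval (subspaceCoeffs e y) (z v) :=
    algebraicIndependent_of_sub_X_mem hz
  let g : (MvPolynomial (CoeffIndex σ d) K ⧸ subspaceIdeal K d e) →ₐ[K] _ :=
    Ideal.Quotient.liftₐ _ (aeval (subspaceCoeffs e y)) fun f hf ↦
      aeval_eq_zero_of_mem_subspaceIdeal hf y
  rw [hcard]
  exact card_le_ringKrullDim_of_algebraicIndependent <| AlgebraicIndependent.of_comp g
    (x := fun v ↦ Ideal.Quotient.mk (subspaceIdeal K d e) (z v)) hind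

end LowerBound

section Line

variable {σ ι : Type*} [Fintype σ] [Fintype ι] {d : ι → ℕ} {e : Fin 2 → σ}

omit [Fintype σ] in
lemma eq_sum_single_of_not_isOffPlane {τ : Type*} [Fintype τ] {e : τ → σ}
    (he : Function.Injective e) {m : σ →₀ ℕ} (hm : ¬ IsOffPlane e m) :
    m = ∑ t, Finsupp.single (e t) (m (e t)) := by
  classical
  ext j
  rw [Finsupp.finsetSum_apply]
  by_cases hj : j ∈ Set.range e
  · obtain ⟨t, rfl⟩ := hj
    simp [Finsupp.single_apply, he.eq_iff]
  · rw [Finset.sum_eq_zero fun t _ ↦ Finsupp.single_eq_of_ne fun h ↦ hj ⟨t, h.symm⟩]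
    exact of_not_not fun hne ↦ hm ⟨j, hj, hne⟩

omit [Fintype σ] in
lemma card_not_isOffPlane_le (he : Function.Injective e) :
    Nat.card {a : CoeffIndex σ d // ¬ IsOffPlane e a.2.1} ≤ ∑ i, (d i + 1) := by
  have hsum (a : {a : CoeffIndex σ d // ¬ IsOffPlane e a.2.1}) :
      a.1.2.1 (e 0) + a.1.2.1 (e 1) = d a.1.1 := by
    have h := congrArg Finsupp.degree (eq_sum_single_of_not_isOffPlane he a.2)
    rw [a.1.2.2, map_sum, Fin.sum_univ_two, Finsupp.degree_single, Finsupp.degree_single] at h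
    exact h.symm
  have hcard : ∑ i, (d i + 1) = Nat.card (Σ i, Fin (d i + 1)) := by simp
  rw [hcard]
  refine Nat.card_le_card_of_injective (fun a ↦ ⟨a.1.1, a.1.2.1 (e 0), ?_⟩) ?_
  · have := hsum a
    omega
  · rintro ⟨⟨i, m⟩, hm⟩ ⟨⟨i', m'⟩, hm'⟩ h
    obtain ⟨rfl, h⟩ := Sigma.mk.inj_iff.mp h
    have h₀ : m.1 (e 0) = m'.1 (e 0) := Fin.mk.inj_iff.mp (eq_of_heq h)
    have hs := hsum ⟨⟨i, m⟩, hm⟩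
    have hs' := hsum ⟨⟨i, m'⟩, hm'⟩
    have h₁ : m.1 (e 1) = m'.1 (e 1) := by
      dsimp only at hs hs'
      omega
    have hmm : m = m' := Subtype.ext <| by
      rw [eq_sum_single_of_not_isOffPlane he hm, eq_sum_single_of_not_isOffPlane he hm',
        Fin.sum_univ_two, Fin.sum_univ_two, h₀, h₁]
    subst hmm
    rfl

theorem le_ringKrullDim_quotient_subspaceIdeal {K : Type*} [Field K] (he : Function.Injective e)
    (hd : ∀ i, 1 ≤ d i) (hσ : Fintype.card σ ≤ Fintype.card ι + 2) :
    ((∑ i, Fintype.card (DegreeExponent σ (d i)) + 2 * (Fintype.card σ - 2) - ∑ i, (d i + 1) : ℕ) :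
      WithBot ℕ∞) ≤ ringKrullDim (MvPolynomial (CoeffIndex σ d) K ⧸ subspaceIdeal K d e) := by
  classical
  have hrange : Fintype.card {j // j ∈ Set.range e} = 2 :=
    (Set.card_range_of_injective he).trans (Fintype.card_fin 2)
  have hcompl : Fintype.card {j // j ∉ Set.range e} ≤ Fintype.card ι := by
    rw [Fintype.card_subtype_compl, hrange]
    omega
  obtain ⟨s⟩ := Function.Embedding.nonempty_of_card_le hcompl
  refine le_trans ?_ (card_add_card_mul_card_le_ringKrullDim he 0 s.injective fun k ↦ hd (s k))
  have hoff := card_not_isOffPlane_le (d := d) he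
  have htotal : Nat.card {a : CoeffIndex σ d // IsOffPlane e a.2.1} +
      Nat.card {a : CoeffIndex σ d // ¬ IsOffPlane e a.2.1} =
      ∑ i, Fintype.card (DegreeExponent σ (d i)) := by
    rw [← Nat.card_sum, Nat.card_congr (Equiv.sumCompl _), Nat.card_eq_fintype_card,
      Fintype.card_sigma]
  rw [Fintype.card_fin]
  exact_mod_cast (by omega)

end Line

/-! ### Zariski topology and prime ideals -/

section Topology

open TopologicalSpace Topology

variable {X Y : Type*} [TopologicalSpace X] [TopologicalSpace Y] {f : X → Y}

theorem isIrreducible_image_iff (hf : IsInducing f) {s : Set X} :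
    IsIrreducible (f '' s) ↔ IsIrreducible s := by
  refine ⟨fun h ↦ ⟨h.1.of_image, fun u v hu hv ↦ ?_⟩, fun h ↦ h.image f hf.continuous.continuousOn⟩
  obtain ⟨u', hu', rfl⟩ := hf.isOpen_iff.mp hu
  obtain ⟨v', hv', rfl⟩ := hf.isOpen_iff.mp hv
  simpa only [← Set.image_inter_preimage, Set.image_nonempty, Set.preimage_inter]
    using h.2 u' v' hu' hv'

theorem topologicalKrullDim_eq_of_closedPoints_subset_range [JacobsonSpace Y] (hf : IsInducing f)
    (h : closedPoints Y ⊆ Set.range f) : topologicalKrullDim X = topologicalKrullDim Y := by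
  have closure_image_preimage (C : IrreducibleCloseds Y) : closure (f '' (f ⁻¹' C)) = C := by
    refine subset_antisymm (closure_minimal (Set.image_preimage_subset _ _) C.isClosed) ?_
    rw [Set.image_preimage_eq_inter_range]
    conv_lhs => rw [← closure_inter_closedPoints C.isClosed]
    exact closure_mono (Set.inter_subset_inter_right _ h)
  let pullback (C : IrreducibleCloseds Y) : IrreducibleCloseds X :=
    ⟨f ⁻¹' C, by
      rw [← isIrreducible_image_iff hf, ← isIrreducible_iff_closure, closure_image_preimage]
      exact C.isIrreducible, C.isClosed.preimage hf.continuous⟩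
  have pullback_strictMono : StrictMono pullback :=
    Monotone.strictMono_of_injective (fun C C' hC ↦ Set.preimage_mono (f := f) hC) fun C C' hC ↦ by
      have hC : f ⁻¹' (C : Set Y) = f ⁻¹' C' := congrArg ((↑) : _ → Set X) hC
      exact IrreducibleCloseds.ext
        (by rw [← closure_image_preimage C, hC, closure_image_preimage C'])
  exact hf.topologicalKrullDim_le.antisymm (Order.krullDim_le_of_strictMono _ pullback_strictMono)

theorem topologicalKrullDim_preimage_of_isClosed [JacobsonSpace Y] (hf : IsInducing f)
    (h : closedPoints Y ⊆ Set.range f) {s : Set Y} (hs : IsClosed s) :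
    topologicalKrullDim (f ⁻¹' s) = topologicalKrullDim s := by
  have := JacobsonSpace.of_isClosedEmbedding hs.isClosedEmbedding_subtypeVal
  refine topologicalKrullDim_eq_of_closedPoints_subset_range (hf.restrictPreimage s) fun y hy ↦ ?_
  rw [← hs.isClosedEmbedding_subtypeVal.preimage_closedPoints] at hy
  obtain ⟨x, hx⟩ := h hy
  exact ⟨⟨x, by rw [Set.mem_preimage, hx]; exact y.2⟩, Subtype.ext hx⟩

theorem topologicalKrullDim_zeroLocus {R : Type*} [CommRing R] (I : Ideal R) :
    topologicalKrullDim (PrimeSpectrum.zeroLocus (I : Set R)) = ringKrullDim (R ⧸ I) := by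
  rw [← PrimeSpectrum.topologicalKrullDim_eq_ringKrullDim]
  have hmk := Ideal.Quotient.mk_surjective (I := I)
  have hrange := range_comap_of_surjective (R ⧸ I) (Ideal.Quotient.mk I) hmk
  rw [Ideal.mk_ker] at hrange
  rw [← hrange]
  exact ((PrimeSpectrum.isEmbedding_comap_of_surjective _ _ hmk).toHomeomorph.symm.isHomeomorph
    ).topologicalKrullDim_eq

theorem inter_nonempty_of_maximal [NoetherianSpace X] {s C : Set X}
    (hC : Maximal (fun t ↦ t ⊆ closure s ∧ IsIrreducible t) C) : (s ∩ C).Nonempty := by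
  obtain ⟨S, hfin, hclosed, hirred, hS⟩ :=
    NoetherianSpace.exists_finite_set_isClosed_irreducible (isClosed_closure (s := s))
  let S' := {t ∈ S | (s ∩ t).Nonempty}
  have hfin' : S'.Finite := hfin.sep _
  have hclosure : closure s ⊆ ⋃₀ S' := by
    refine closure_minimal (fun x hx ↦ ?_) ?_
    · obtain ⟨t, ht, hxt⟩ := Set.mem_sUnion.mp (hS ▸ subset_closure hx)
      exact ⟨t, ⟨ht, x, hx, hxt⟩, hxt⟩
    · rw [Set.sUnion_eq_biUnion]
      exact hfin'.isClosed_biUnion fun t ht ↦ hclosed t ht.1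
  obtain ⟨t, ht, hCt⟩ := isIrreducible_iff_sUnion_isClosed.mp hC.1.2 hfin'.toFinset
    (fun t ht ↦ hclosed t (hfin'.mem_toFinset.mp ht).1)
    (by rw [hfin'.coe_toFinset]; exact hC.1.1.trans hclosure)
  obtain ⟨htS, hst⟩ := hfin'.mem_toFinset.mp ht
  have htC : t ⊆ C := hC.2 ⟨hS ▸ Set.subset_sUnion_of_mem htS, hirred t htS⟩ hCt
  exact hst.mono (Set.inter_subset_inter_right _ htC)

theorem dimSet_mono {s t : Set X} (hst : s ⊆ t) : dimSet s ≤ dimSet t :=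
  (IsEmbedding.inclusion (closure_mono hst)).isInducing.topologicalKrullDim_le

theorem maximal_and_dimSet_lt_of_subset_or_dimSet_lt [NoetherianSpace X] {Z D L : Set X}
    (hZ : IsClosed Z) (hD : IsClosed D) (hL : IsIrreducible L) (hLZ : L ⊆ Z) (hLD : ¬ L ⊆ D)
    (h : ∀ T, IsIrreducible T → T ⊆ Z → ¬ T ⊆ D → T ⊆ L ∨ dimSet T < dimSet L) :
    Maximal (fun t ↦ t ⊆ closure (Z \ D) ∧ IsIrreducible t) L ∧
      ∀ C, Maximal (fun t ↦ t ⊆ closure (Z \ D) ∧ IsIrreducible t) C → C ≠ L →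
        dimSet C < dimSet L := by
  have hclosure : closure (Z \ D) ⊆ Z := closure_minimal Set.sdiff_subset hZ
  have hLclosure : L ⊆ closure (Z \ D) :=
    (subset_closure_inter_of_isPreirreducible_of_isOpen hL.2 hD.isOpen_compl
      (Set.inter_compl_nonempty_iff.mpr hLD)).trans
        (closure_mono (Set.inter_subset_inter_left _ hLZ))
  refine ⟨⟨⟨hLclosure, hL⟩, fun T hT hLT ↦ ?_⟩, fun C hC hCL ↦ ?_⟩
  · refine (h T hT.2 (hT.1.trans hclosure) fun hTD ↦ hLD (hLT.trans hTD)).resolve_right ?_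
    exact (dimSet_mono hLT).not_gt
  · obtain ⟨x, hx, hxC⟩ := inter_nonempty_of_maximal hC
    refine (h C hC.1.2 (hC.1.1.trans hclosure) fun hCD ↦ hx.2 (hCD hxC)).resolve_left ?_
    exact fun hCL' ↦ hCL (hCL'.antisymm (hC.2 ⟨hLclosure, hL⟩ hCL'))

end Topology

section AffineSpace

open TopologicalSpace Topology

variable {K M κ : Type*} [Field K] [AddCommGroup M] [Module K M]

theorem isClosed_zariskiTopology_iff {s : Set M} :
    IsClosed[zariskiTopology K M] s ↔ s ∈ zariskiCloseds K M := by
  rw [← @isOpen_compl_iff M s (zariskiTopology K M)]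
  change sᶜᶜ ∈ zariskiCloseds K M ↔ _
  rw [compl_compl]

theorem eval_aeval_coordinates [Fintype κ] [DecidableEq κ] (e : M ≃ₗ[K] (κ → K))
    (p : MvPolynomial (M →ₗ[K] K) K) (v : M) :
    eval (e v) (aeval (fun φ : M →ₗ[K] K ↦ ∑ i, C (φ (e.symm (Pi.single i 1))) * X i) p) =
      polyEval K M p v := by
  have hv : v = ∑ i, e v i • e.symm (Pi.single i 1) := by
    conv_lhs => rw [← e.symm_apply_apply v, pi_eq_sum_univ' (e v), map_sum]
    simp only [map_smul]
  rw [polyEval, ← aeval_eq_eval, ← aeval_eq_eval, comp_aeval_apply]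
  congr 2
  funext φ
  conv_rhs => rw [hv]
  simp only [map_sum, map_mul, map_smul, aeval_X, smul_eq_mul, mul_comm, algHom_C,
    Algebra.algebraMap_self_apply]

theorem mem_zariskiCloseds_iff [Finite κ] (e : M ≃ₗ[K] (κ → K)) {s : Set M} :
    s ∈ zariskiCloseds K M ↔
      ∃ S : Set (MvPolynomial κ K), s = {v | ∀ p ∈ S, eval (e v) p = 0} := by
  classical
  cases nonempty_fintype κ
  constructor
  · rintro ⟨S, rfl⟩
    refine ⟨aeval (fun φ ↦ ∑ i, C (φ (e.symm (Pi.single i 1))) * X i) '' S, ?_⟩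
    simp only [Set.forall_mem_image, eval_aeval_coordinates]
  · rintro ⟨S, rfl⟩
    refine ⟨rename (fun i ↦ (LinearMap.proj i).comp e.toLinearMap) '' S, ?_⟩
    simp only [Set.forall_mem_image, polyEval, eval_rename]
    rfl

omit [AddCommGroup M] [Module K M] in
theorem preimage_pointToPoint_zeroLocus (x : M → κ → K) (S : Set (MvPolynomial κ K)) :
    (fun v ↦ pointToPoint (k := K) (x v)) ⁻¹' PrimeSpectrum.zeroLocus S =
      {v | ∀ p ∈ S, eval (x v) p = 0} := by
  ext v
  exact forall₂_congr fun p _ ↦ mem_vanishingIdeal_singleton_iff (x v) p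

theorem isInducing_pointToPoint [Finite κ] (e : M ≃ₗ[K] (κ → K)) :
    @IsInducing _ _ (zariskiTopology K M) _ fun v ↦ pointToPoint (k := K) (e v) := by
  let _ := zariskiTopology K M
  refine (isInducing_iff _).mpr (TopologicalSpace.ext_isClosed fun s ↦ ?_)
  rw [isClosed_zariskiTopology_iff, mem_zariskiCloseds_iff e, isClosed_induced_iff]
  simp_rw [PrimeSpectrum.isClosed_iff_zeroLocus]
  constructor
  · rintro ⟨S, rfl⟩
    exact ⟨_, ⟨S, rfl⟩, preimage_pointToPoint_zeroLocus e S⟩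
  · rintro ⟨_, ⟨S, rfl⟩, rfl⟩
    exact ⟨S, preimage_pointToPoint_zeroLocus e S⟩

theorem closedPoints_subset_range_pointToPoint [IsAlgClosed K] [Finite κ] :
    closedPoints (PrimeSpectrum (MvPolynomial κ K)) ⊆
      Set.range (pointToPoint (k := K) (K := K)) := by
  intro P hP
  obtain ⟨x, hx⟩ := (isMaximal_iff_eq_vanishingIdeal_singleton (K := K)).mp
    ((PrimeSpectrum.isClosed_singleton_iff_isMaximal P).mp hP)
  exact ⟨x, PrimeSpectrum.ext hx.symm⟩

omit [AddCommGroup M] [Module K M]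

variable [TopologicalSpace M] {x : M → κ → K}

theorem isClosed_setOf_forall_eval_eq_zero (hx : IsInducing fun v ↦ pointToPoint (k := K) (x v))
    (S : Set (MvPolynomial κ K)) : IsClosed {v | ∀ p ∈ S, eval (x v) p = 0} := by
  rw [← preimage_pointToPoint_zeroLocus]
  exact (PrimeSpectrum.isClosed_zeroLocus S).preimage hx.continuous

theorem isIrreducible_iff_isPrime_vanishingIdeal
    (hx : IsInducing fun v ↦ pointToPoint (k := K) (x v)) {s : Set M} :
    IsIrreducible s ↔ (vanishingIdeal K (x '' s)).IsPrime := by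
  rw [← isIrreducible_image_iff hx, PrimeSpectrum.isIrreducible_iff_vanishingIdeal_isPrime,
    ← vanishingIdeal_pointToPoint, Set.image_image]

theorem dimSet_eq_ringKrullDim [IsAlgClosed K] [Finite κ]
    (hx : IsInducing fun v ↦ pointToPoint (k := K) (x v)) (hsurj : Function.Surjective x)
    (s : Set M) : dimSet s = ringKrullDim (MvPolynomial κ K ⧸ vanishingIdeal K (x '' s)) := by
  have hrange : closedPoints (PrimeSpectrum (MvPolynomial κ K)) ⊆
      Set.range fun v ↦ pointToPoint (k := K) (x v) := by
    rw [Set.range_comp', hsurj.range_eq, Set.image_univ]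
    exact closedPoints_subset_range_pointToPoint
  rw [dimSet, hx.closure_eq_preimage_closure_image,
    topologicalKrullDim_preimage_of_isClosed hx hrange isClosed_closure,
    ← PrimeSpectrum.zeroLocus_vanishingIdeal_eq_closure, ← Set.image_image pointToPoint x,
    vanishingIdeal_pointToPoint, topologicalKrullDim_zeroLocus]

end AffineSpace

/-! ### The irreducible components of the locus of forms meeting in a curve -/

section UniversalFamily

variable {K σ ι Ω : Type*} [Field K] [Fintype σ] [Field Ω] [Algebra K Ω] {d : ι → ℕ}

variable (K σ d) in
/-- Equations for the locus of families of forms of degrees `d` whose members indexed by `s` cut out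
an affine cone of dimension greater than `h`. -/
def coneDimensionEquations (s : Set ι) (h : ℕ) : Set (MvPolynomial (CoeffIndex σ d) K) :=
  dimensionEquations K (fun i : s ↦ formOfCoeffs (d := d) X i) (fun i ↦ d i) h

lemma lt_ringKrullDim_formOfCoeffs_iff [Infinite K] (s : Set ι) (h : ℕ)
    (y : CoeffIndex σ d → Ω) :
    (h : WithBot ℕ∞) < ringKrullDim (MvPolynomial σ Ω ⧸ Ideal.span (formOfCoeffs y '' s)) ↔
      ∀ a ∈ coneDimensionEquations K σ d s h, aeval y a = 0 := by
  let φ : MvPolynomial (CoeffIndex σ d) K →ₐ[K] Ω := aeval y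
  have hφ : φ ∘ X = y := _root_.funext (aeval_X y)
  have hmap : (fun i : s ↦ map (φ : MvPolynomial (CoeffIndex σ d) K →+* Ω) (formOfCoeffs X i.1)) =
      fun i : s ↦ formOfCoeffs y i := by
    funext i
    rw [map_formOfCoeffs, ← hφ]
    rfl
  rw [Set.image_eq_range, ← hmap]
  exact lt_ringKrullDim_iff_dimensionEquations
    (fun i : s ↦ isHomogeneous_formOfCoeffs (X (R := K)) i.1) φ h

lemma subspaceIdeal_le_ker_aeval {e : Fin 2 → σ} (he : Function.Injective e)
    {y : CoeffIndex σ d → Ω} (hy : VanishOnLine (formOfCoeffs y)) :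
    subspaceIdeal K d e ≤ RingHom.ker (aeval (R := K) y) := by
  obtain ⟨z, rfl⟩ := (vanishOnLine_formOfCoeffs_iff he).mp hy
  exact fun f hf ↦ aeval_eq_zero_of_mem_subspaceIdeal hf z

omit [Fintype σ] in
lemma ringKrullDim_quotient_ker_aeval_le [Finite σ] [Finite ι] [IsAlgClosed Ω]
    {y : CoeffIndex σ d → Ω} {B : Finset Ω}
    (hy : ∀ i, HasCoeffsIn (algebraicHull K (B : Set Ω)) (formOfCoeffs y i)) :
    ringKrullDim (MvPolynomial (CoeffIndex σ d) K ⧸ RingHom.ker (aeval (R := K) y)) ≤ B.card := by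
  let f := Ideal.kerLiftAlg (aeval (R := K) y)
  have hmem (x : MvPolynomial (CoeffIndex σ d) K ⧸ RingHom.ker (aeval (R := K) y)) :
      f x ∈ algebraicHull K (B : Set Ω) := by
    obtain ⟨p, rfl⟩ := Ideal.Quotient.mk_surjective x
    have hyB (a : CoeffIndex σ d) : y a ∈ (algebraicHull K (B : Set Ω)).toSubalgebra :=
      coeff_formOfCoeffs y a ▸ hy a.1 a.2.1
    exact Algebra.adjoin_le (Set.range_subset_iff.mpr hyB)
      ((Algebra.adjoin_range_eq_range_aeval K y).ge ⟨p, rfl⟩)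
  simpa using ringKrullDim_le_encard_of_range_subset_algebraicHull
    (Ideal.kerLiftAlg_injective (aeval (R := K) y)) hmem

variable [Fintype ι] {e : Fin 2 → σ} {i₀ : ι}

lemma vanishOnLine_or_ringKrullDim_lt [IsAlgClosed Ω] (he : Function.Injective e)
    (hd : ∀ i, 1 ≤ d i) (hmax : ∀ i, d i ≤ d i₀) (hσ : Fintype.card σ ≤ Fintype.card ι + 1)
    {y : CoeffIndex σ d → Ω}
    (hy₁ : 2 ≤ ringKrullDim (MvPolynomial σ Ω ⧸ Ideal.span (Set.range (formOfCoeffs y))))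
    (hy₂ : ringKrullDim (MvPolynomial σ Ω ⧸ Ideal.span (formOfCoeffs y '' {i₀}ᶜ)) ≤ 2) :
    VanishOnLine (formOfCoeffs y) ∨
      ringKrullDim (MvPolynomial (CoeffIndex σ d) K ⧸ RingHom.ker (aeval (R := K) y)) <
        ringKrullDim (MvPolynomial (CoeffIndex σ d) K ⧸ subspaceIdeal K d e) := by
  refine (vanishOnLine_or_exists_parameters (K := K) (isHomogeneous_formOfCoeffs y) hd hmax hσ
    hy₁ hy₂).imp_right ?_
  rintro ⟨B, hB, hcard⟩
  calc ringKrullDim (MvPolynomial (CoeffIndex σ d) K ⧸ RingHom.ker (aeval (R := K) y))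
      ≤ B.card := ringKrullDim_quotient_ker_aeval_le hB
    _ < (∑ i, Fintype.card (DegreeExponent σ (d i)) + 2 * (Fintype.card σ - 2) -
          ∑ i, (d i + 1) : ℕ) := by exact_mod_cast (by omega)
    _ ≤ _ := le_ringKrullDim_quotient_subspaceIdeal he hd (by omega)

theorem subspaceIdeal_le_or_ringKrullDim_lt [Infinite K] (he : Function.Injective e)
    (hd : ∀ i, 1 ≤ d i) (hmax : ∀ i, d i ≤ d i₀) (hσ : Fintype.card σ ≤ Fintype.card ι + 1)
    (I : Ideal (MvPolynomial (CoeffIndex σ d) K)) [I.IsPrime]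
    (hI₁ : coneDimensionEquations K σ d Set.univ 1 ⊆ I)
    (hI₂ : ¬ coneDimensionEquations K σ d {i₀}ᶜ 2 ⊆ I) :
    subspaceIdeal K d e ≤ I ∨
      ringKrullDim (MvPolynomial (CoeffIndex σ d) K ⧸ I) <
        ringKrullDim (MvPolynomial (CoeffIndex σ d) K ⧸ subspaceIdeal K d e) := by
  let A := MvPolynomial (CoeffIndex σ d) K
  let Ω := AlgebraicClosure (FractionRing (A ⧸ I))
  let y (a : CoeffIndex σ d) : Ω := algebraMap (A ⧸ I) Ω (Ideal.Quotient.mk I (X a))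
  have hy (f : A) : aeval y f = algebraMap (A ⧸ I) Ω (Ideal.Quotient.mk I f) :=
    DFunLike.congr_fun (MvPolynomial.algHom_ext (f := aeval y)
      (g := (IsScalarTower.toAlgHom K (A ⧸ I) Ω).comp (Ideal.Quotient.mkₐ K I)) (by simp [y])) f
  have hinj : Function.Injective (algebraMap (A ⧸ I) Ω) := by
    rw [IsScalarTower.algebraMap_eq (A ⧸ I) (FractionRing (A ⧸ I)) Ω]
    exact (algebraMap (FractionRing (A ⧸ I)) Ω).injective.comp (IsFractionRing.injective _ _)
  have hyI (f : A) : aeval y f = 0 ↔ f ∈ I := by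
    rw [hy, map_eq_zero_iff _ hinj, Ideal.Quotient.eq_zero_iff_mem]
  have hker : RingHom.ker (aeval (R := K) y) = I := Ideal.ext hyI
  have h₁ := (lt_ringKrullDim_formOfCoeffs_iff Set.univ 1 y).mpr fun f hf ↦ (hyI f).mpr (hI₁ hf)
  have h₂ := mt (lt_ringKrullDim_formOfCoeffs_iff {i₀}ᶜ 2 y).mp fun h ↦
    hI₂ fun f hf ↦ (hyI f).mp (h f hf)
  rw [Set.image_univ, ← ENat.WithBot.add_one_le_iff, Nat.cast_one, one_add_one_eq_two] at h₁
  rw [← hker]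
  exact (vanishOnLine_or_ringKrullDim_lt he hd hmax hσ h₁
    (not_lt.mp h₂)).imp_left (subspaceIdeal_le_ker_aeval he)

end UniversalFamily

section CompleteIntersection

variable {σ τ ι K : Type*} [Field K] {d : ι → ℕ}

lemma ringKrullDim_quotient_le_card_of_X_pow_mem [Fintype τ] {e : τ → σ}
    (he : Function.Injective e) {I : Ideal (MvPolynomial σ K)}
    (hI : ∀ j ∉ Set.range e, ∃ n, X j ^ n ∈ I) :
    ringKrullDim (MvPolynomial σ K ⧸ I) ≤ Fintype.card τ := by
  classical
  by_contra! hlt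
  rw [← ENat.WithBot.add_one_le_iff] at hlt
  obtain ⟨P, hP, hIP, hdim⟩ :=
    exists_isPrime_le_ringKrullDim_quotient (n := Fintype.card τ + 1) (by exact_mod_cast hlt)
  have hle : RingHom.ker (linearSubst fun t ↦ (Pi.single (e t) 1 : σ → K)) ≤ P := by
    rw [ker_linearSubst_single he, Ideal.span_le]
    rintro _ ⟨j, hj, rfl⟩
    obtain ⟨n, hn⟩ := hI j hj
    exact hP.mem_of_pow_mem n (hIP hn)
  have hker := hdim.trans (ringKrullDim_quotient_anti hle)
  rw [ringKrullDim_quotient_ker_linearSubst (isEchelon_single he).linearSubst_surjective] at hker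
  exact absurd (Nat.cast_le.mp hker) (by omega)

lemma exists_vanishOnLine_ringKrullDim_le_two [Fintype σ] [Fintype ι] {e : Fin 2 → σ}
    (he : Function.Injective e) (hd : ∀ i, 1 ≤ d i)
    (hσ : Fintype.card σ ≤ Fintype.card ι + 1) (i₀ : ι) :
    ∃ F : ι → MvPolynomial σ K, (∀ i, (F i).IsHomogeneous (d i)) ∧ VanishOnLine F ∧
      ringKrullDim (MvPolynomial σ K ⧸ Ideal.span (F '' {i₀}ᶜ)) ≤ 2 := by
  classical
  have hrange : Fintype.card {j // j ∈ Set.range e} = 2 :=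
    (Set.card_range_of_injective he).trans (Fintype.card_fin 2)
  have hcard : Fintype.card {j // j ∉ Set.range e} ≤ Fintype.card {i // i ≠ i₀} := by
    rw [Fintype.card_subtype_compl, Fintype.card_subtype_compl, hrange, Fintype.card_subtype_eq]
    omega
  obtain ⟨s⟩ := Function.Embedding.nonempty_of_card_le hcard
  have hs : Function.Injective fun j ↦ (s j).1 := Subtype.val_injective.comp s.injective
  let F : ι → MvPolynomial σ K := Function.extend (fun j ↦ (s j).1) (fun j ↦ X j.1 ^ d (s j)) 0
  have hFs (j : {j // j ∉ Set.range e}) : F (s j) = X j.1 ^ d (s j) := hs.extend_apply _ _ j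
  have hF₀ {i : ι} (hi : ¬ ∃ j, (s j).1 = i) : F i = 0 := Function.extend_apply' _ _ i hi
  refine ⟨F, fun i ↦ ?_, ⟨fun t ↦ Pi.single (e t) 1, ?_, fun i ↦ ?_⟩, ?_⟩
  · by_cases hi : ∃ j, (s j).1 = i
    · obtain ⟨j, rfl⟩ := hi
      exact hFs j ▸ isHomogeneous_X_pow _ _
    · exact hF₀ hi ▸ isHomogeneous_zero ..
  · exact (isEchelon_single he).linearIndependent
  · by_cases hi : ∃ j, (s j).1 = i
    · obtain ⟨j, rfl⟩ := hi
      rw [← RingHom.mem_ker, ker_linearSubst_single he, hFs]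
      exact Ideal.pow_mem_of_mem _ (Ideal.subset_span (Set.mem_image_of_mem X j.2)) _ (hd _)
    · rw [hF₀ hi, map_zero]
  · have hmem (j : {j // j ∉ Set.range e}) : X j.1 ^ d (s j) ∈ Ideal.span (F '' {i₀}ᶜ) :=
      hFs j ▸ Ideal.subset_span (Set.mem_image_of_mem F (s j).2)
    simpa using ringKrullDim_quotient_le_card_of_X_pow_mem he fun j hj ↦ ⟨_, hmem ⟨j, hj⟩⟩

end CompleteIntersection

section Locus

open Topology TopologicalSpace

variable {σ ι K M : Type*} [Field K] [Fintype σ] {d : ι → ℕ} {e : Fin 2 → σ}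

lemma vanishOnLine_formOfCoeffs_iff_forall_mem_subspaceIdeal [IsAlgClosed K]
    (he : Function.Injective e) {y : CoeffIndex σ d → K} :
    VanishOnLine (formOfCoeffs y) ↔ ∀ f ∈ subspaceIdeal K d e, aeval y f = 0 := by
  have : Infinite K := IsAlgClosed.instInfinite
  let U (i : ι) : MvPolynomial σ (MvPolynomial (CoeffIndex σ d) K) := formOfCoeffs X i
  have key (z : CoeffIndex σ d → K) : VanishOnLine (formOfCoeffs z) ↔
      ∀ f ∈ macaulayMinors (lineSystem K U) (lineSystemDegree K σ d), aeval z f = 0 := by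
    let φ : MvPolynomial (CoeffIndex σ d) K →ₐ[K] K := aeval z
    have hφ : φ ∘ X = z := _root_.funext (aeval_X z)
    have hU : (fun i ↦ map (φ : MvPolynomial (CoeffIndex σ d) K →+* K) (U i)) =
        formOfCoeffs z := by
      funext i
      rw [map_formOfCoeffs, ← hφ]
      rfl
    exact hU ▸ vanishOnLine_iff_macaulayMinors (isHomogeneous_formOfCoeffs X) φ
  refine ⟨fun h f hf ↦ subspaceIdeal_le_ker_aeval he h hf, fun h ↦ (key y).mpr fun f hf ↦ h f ?_⟩
  exact mem_subspaceIdeal_iff.mpr fun z ↦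
    (key _).mp ((vanishOnLine_formOfCoeffs_iff he).mpr ⟨z, rfl⟩) f hf

variable [Fintype ι] [TopologicalSpace M] {x : M → CoeffIndex σ d → K}

omit [Fintype ι] [TopologicalSpace M] in
lemma vanishingIdeal_image_setOf_vanishOnLine [Infinite K] (hx : Function.Surjective x)
    (he : Function.Injective e) :
    vanishingIdeal K (x '' {v | VanishOnLine (formOfCoeffs (x v))}) = subspaceIdeal K d e := by
  ext f
  rw [mem_vanishingIdeal_iff, mem_subspaceIdeal_iff, Set.forall_mem_image]
  constructor
  · intro h y
    obtain ⟨v, hv⟩ := hx (subspaceCoeffs e y)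
    exact hv ▸ h ((vanishOnLine_formOfCoeffs_iff he).mpr ⟨y, hv.symm⟩)
  · intro h v hv
    obtain ⟨y, hy⟩ := (vanishOnLine_formOfCoeffs_iff he).mp hv
    exact hy ▸ h y

omit [Fintype σ] [Fintype ι] in
lemma isClosed_setOf_lt_ringKrullDim [Finite σ] [Infinite K]
    (hx : IsInducing fun v ↦ pointToPoint (k := K) (x v)) (s : Set ι) (h : ℕ) :
    IsClosed {v | (h : WithBot ℕ∞) <
      ringKrullDim (MvPolynomial σ K ⧸ Ideal.span (formOfCoeffs (x v) '' s))} := by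
  have := Fintype.ofFinite σ
  simp only [lt_ringKrullDim_formOfCoeffs_iff (K := K)]
  exact isClosed_setOf_forall_eval_eq_zero hx _

omit [Fintype ι] [TopologicalSpace M] in
lemma coneDimensionEquations_subset_vanishingIdeal_iff [Infinite K] {T : Set M} {s : Set ι}
    {h : ℕ} :
    coneDimensionEquations K σ d s h ⊆ vanishingIdeal K (x '' T) ↔
      T ⊆ {v | (h : WithBot ℕ∞) <
        ringKrullDim (MvPolynomial σ K ⧸ Ideal.span (formOfCoeffs (x v) '' s))} := by
  simp only [lt_ringKrullDim_formOfCoeffs_iff (K := K)]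
  exact ⟨fun h v hv f hf ↦ h hf _ ⟨v, hv, rfl⟩,
    fun h f hf ↦ by rintro _ ⟨v, hv, rfl⟩; exact h hv f hf⟩

theorem maximal_and_dimSet_lt_setOf_vanishOnLine [IsAlgClosed K]
    (hx : IsInducing fun v ↦ pointToPoint (k := K) (x v)) (hsurj : Function.Surjective x)
    (hd : ∀ i, 1 ≤ d i) {i₀ : ι} (hmax : ∀ i, d i ≤ d i₀) (hσ₂ : 2 ≤ Fintype.card σ)
    (hσ : Fintype.card σ ≤ Fintype.card ι + 1) {Z D L : Set M}
    (hZ : Z = {v | ((1 : ℕ) : WithBot ℕ∞) <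
      ringKrullDim (MvPolynomial σ K ⧸ Ideal.span (formOfCoeffs (x v) '' Set.univ))})
    (hD : D = {v | ((2 : ℕ) : WithBot ℕ∞) <
      ringKrullDim (MvPolynomial σ K ⧸ Ideal.span (formOfCoeffs (x v) '' {i₀}ᶜ))})
    (hL : L = {v | VanishOnLine (formOfCoeffs (x v))}) :
    Maximal (fun t ↦ t ⊆ closure (Z \ D) ∧ IsIrreducible t) L ∧
      ∀ C, Maximal (fun t ↦ t ⊆ closure (Z \ D) ∧ IsIrreducible t) C → C ≠ L →
        dimSet C < dimSet L := by
  have : Infinite K := IsAlgClosed.instInfinite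
  have : NoetherianSpace M := hx.noetherianSpace
  obtain ⟨e⟩ : Nonempty (Fin 2 ↪ σ) :=
    Function.Embedding.nonempty_of_card_le (by simpa using hσ₂)
  have hIL : vanishingIdeal K (x '' L) = subspaceIdeal K d e :=
    hL ▸ vanishingIdeal_image_setOf_vanishOnLine hsurj e.injective
  refine maximal_and_dimSet_lt_of_subset_or_dimSet_lt
    (hZ ▸ isClosed_setOf_lt_ringKrullDim hx Set.univ 1)
    (hD ▸ isClosed_setOf_lt_ringKrullDim hx {i₀}ᶜ 2) ?_ ?_ ?_ ?_
  · rw [isIrreducible_iff_isPrime_vanishingIdeal hx, hIL]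
    infer_instance
  · subst hL hZ
    intro v hv
    rw [Set.mem_ofPred_eq, Set.image_univ]
    exact lt_of_lt_of_le (by norm_num) hv.two_le_ringKrullDim
  · obtain ⟨F, hF, hline, hdim⟩ :=
      exists_vanishOnLine_ringKrullDim_le_two (K := K) e.injective hd hσ i₀
    obtain ⟨v, hv⟩ := hsurj fun a ↦ coeff a.2.1 (F a.1)
    have hvF : formOfCoeffs (x v) = F := hv ▸ formOfCoeffs_coeff hF
    subst hL hD
    refine Set.not_subset.mpr ⟨v, ?_, ?_⟩
    · exact show VanishOnLine (formOfCoeffs (x v)) from hvF ▸ hline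
    · rw [Set.mem_ofPred_eq, hvF, not_lt]
      exact_mod_cast hdim
  · intro T hT hTZ hTD
    have := (isIrreducible_iff_isPrime_vanishingIdeal hx).mp hT
    rw [dimSet_eq_ringKrullDim hx hsurj, dimSet_eq_ringKrullDim hx hsurj, hIL]
    subst hL hZ hD
    refine (subspaceIdeal_le_or_ringKrullDim_lt e.injective hd hmax hσ _
      (coneDimensionEquations_subset_vanishingIdeal_iff.mpr hTZ)
      (mt coneDimensionEquations_subset_vanishingIdeal_iff.mp hTD)).imp_left fun h v hv ↦ ?_
    exact (vanishOnLine_formOfCoeffs_iff_forall_mem_subspaceIdeal e.injective).mpr fun f hf ↦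
      h hf _ ⟨v, hv, rfl⟩

end Locus

section TupleSpace

variable (K : Type*) [Field K] {r N : ℕ} (d : Fin N → ℕ)

/-- The linear coordinates of `tupleSpace K r N d` given by the coefficients of the forms. -/
def tupleSpaceCoords : tupleSpace K r N d ≃ₗ[K] (CoeffIndex (Fin (r + 1)) d → K) where
  toFun F a := coeff a.2.1 (F a.1 : MvPolynomial (Fin (r + 1)) K)
  map_add' F G := by simp only [Pi.add_apply, Submodule.coe_add, coeff_add]; rfl
  map_smul' c F := by simp only [Pi.smul_apply, Submodule.coe_smul, coeff_smul]; rfl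
  invFun x i := ⟨formOfCoeffs x i, isHomogeneous_formOfCoeffs x i⟩
  left_inv F := _root_.funext fun i ↦
    Subtype.ext (congrFun (formOfCoeffs_coeff fun i ↦ (F i).2) i)
  right_inv x := _root_.funext (coeff_formOfCoeffs x)

variable {K d}

lemma formOfCoeffs_tupleSpaceCoords (F : tupleSpace K r N d) :
    formOfCoeffs (tupleSpaceCoords K d F) = fun i ↦ (F i : MvPolynomial (Fin (r + 1)) K) :=
  formOfCoeffs_coeff fun i ↦ (F i).2

lemma vanishOnCommonLine_iff_vanishOnLine [Infinite K] (F : tupleSpace K r N d) :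
    vanishOnCommonLine K F ↔ VanishOnLine fun i ↦ (F i : MvPolynomial (Fin (r + 1)) K) :=
  vanishOnLine_iff_eval_eq_zero.symm

lemma vdimGE_iff_toNat_lt {F : Fin N → MvPolynomial (Fin (r + 1)) K} {m : ℤ} :
    vdimGE r N F m ↔ ((m.toNat : ℕ) : WithBot ℕ∞) <
      ringKrullDim (MvPolynomial (Fin (r + 1)) K ⧸ Ideal.span (Set.range F)) := by
  rw [vdimGE, Nat.cast_add_one]
  exact ENat.WithBot.add_one_le_iff

end TupleSpace

end

end CommonLine

noncomputable section Statement1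

open MvPolynomial

variable (K : Type*) [Field K]

open CommonLine in
theorem statement1_general [IsAlgClosed K] {r n N : ℕ} (hN : N = n + 1) (hnN : n ≤ N)
    (hr : 1 ≤ r) (hrN : r ≤ N) {d : Fin N → ℕ} (hd1 : ∀ i, 1 ≤ d i)
    (hlast : ∀ i j : Fin N, (j : ℕ) = n → d i ≤ d j) (Z D L : Set (tupleSpace K r N d))
    (hZ : Z = {F | vdimGE r N (fun i ↦ (F i : MvPolynomial (Fin (r + 1)) K)) 1})
    (hD : D = {F | vdimGE r n
      (fun i ↦ (F (Fin.castLE hnN i) : MvPolynomial (Fin (r + 1)) K)) 2})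
    (hL : L = {F | vanishOnCommonLine K F}) :
    Maximal (fun t ↦ t ⊆ closure (Z \ D) ∧ IsIrreducible t) L ∧
      ∀ C : Set (tupleSpace K r N d),
        Maximal (fun t ↦ t ⊆ closure (Z \ D) ∧ IsIrreducible t) C → C ≠ L →
          dimSet C < dimSet L := by
  subst hN
  have : Infinite K := IsAlgClosed.instInfinite
  have hrange : Set.range (Fin.castLE hnN) = {Fin.last n}ᶜ := by
    ext i
    simp only [Fin.range_castLE, Set.mem_ofPred_eq, Set.mem_compl_iff, Set.mem_singleton_iff,
      Fin.ext_iff, Fin.val_last]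
    omega
  refine maximal_and_dimSet_lt_setOf_vanishOnLine (isInducing_pointToPoint (tupleSpaceCoords K d))
    (tupleSpaceCoords K d).surjective hd1 (i₀ := Fin.last n)
    (fun i ↦ hlast i _ rfl) (by simpa using hr) (by simpa using hrN) ?_ ?_ ?_
  · exact hZ.trans <| Set.ext fun F ↦ vdimGE_iff_toNat_lt.trans <| by
      rw [Set.mem_ofPred_eq, formOfCoeffs_tupleSpaceCoords, Set.image_univ]; rfl
  · exact hD.trans <| Set.ext fun F ↦ vdimGE_iff_toNat_lt.trans <| by
      rw [Set.mem_ofPred_eq, formOfCoeffs_tupleSpaceCoords, ← hrange, ← Set.range_comp]; rfl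
  · simp only [hL, formOfCoeffs_tupleSpaceCoords, vanishOnCommonLine_iff_vanishOnLine]

/-- For `r ≥ 2`, `a ≥ 1`, and degrees `1 ≤ d 0 ≤ ⋯ ≤ d (r+a-2)`, let `Z` be
the locus of `(r+a-1)`-tuples `(F_1, …, F_{r+a-1})` with `dim V(F_1, …, F_{r+a-1}) ≥ 1`, let
`D` be the locus where `dim V(F_1, …, F_{r+a-2}) ≥ 2`, and let `L` be the locus of tuples
vanishing on a common line. Then the Zariski closure of `Z \ D` has a unique irreducible
component of maximal dimension, and this component equals `L`. -/
theorem statement1 [IsAlgClosed K] (r a : ℕ) (hr : 2 ≤ r) (ha : 1 ≤ a)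
    (d : Fin (r + a - 1) → ℕ) (hd1 : ∀ i, 1 ≤ d i) (hmono : Monotone d)
    (Z D L : Set (tupleSpace K r (r + a - 1) d))
    (hZ : Z = {F | vdimGE r (r + a - 1)
      (fun i => (F i : MvPolynomial (Fin (r + 1)) K)) 1})
    (hD : D = {F | vdimGE r (r + a - 2)
      (fun i : Fin (r + a - 2) =>
        (F (Fin.castLE (by omega) i) : MvPolynomial (Fin (r + 1)) K)) 2})
    (hL : L = {F | vanishOnCommonLine K F}) :
    Maximal (fun t => t ⊆ closure (Z \ D) ∧ IsIrreducible t) L ∧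
      ∀ C : Set (tupleSpace K r (r + a - 1) d),
        Maximal (fun t => t ⊆ closure (Z \ D) ∧ IsIrreducible t) C → C ≠ L →
          dimSet C < dimSet L :=
  statement1_general K (n := r + a - 2) (by omega) (by omega) (by omega) (by omega) hd1
    (fun _ _ hj ↦ hmono (Fin.le_def.mpr (by omega))) Z D L hZ hD hL

end Statement1
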